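/- Let n ≥ 2, let 1 < s ≤ n, and let A ⊆ ℝⁿ be a Borel set with 0 < H^s(A) < ∞. Then there is a Borel set B ⊆ ℝⁿ with dimH B ≤ 1 such that for every x ∈ ℝⁿ \ B, the set of unit vectors e ∈ S^{n−1} for which dimH( A ∩ ( x + e^⊥ ) ) = s − 1 has positive (n−1)-dimensional Hausdorff measure in S^{n−1}, where e^⊥ = { y ∈ ℝⁿ : ⟨y, e⟩ = 0 }. -/

import Mathlib

open MeasureTheory Metric Set
open scoped ENNReal RealInnerProductSpace

/-! ### Dyadic cubes and a Frostman-type covering theorem for open sets -/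

/-- The half-open dyadic cube of side length `2 ^ (-k)` with lower corner `2 ^ (-k) • z`. -/
def dyadicCube {n : ℕ} (k : ℕ) (z : Fin n → ℤ) : Set (EuclideanSpace ℝ (Fin n)) :=
  {x | ∀ i, ⌊(2 : ℝ) ^ k * x i⌋ = z i}

/-- The indices of the dyadic subcubes of half the side length. -/
def dyadicChildren {n : ℕ} (z : Fin n → ℤ) : Finset (Fin n → ℤ) :=
  Fintype.piFinset fun i => {2 * z i, 2 * z i + 1}

/-- The side length of a dyadic cube of generation `k`, raised to the power `q`. -/
noncomputable def dyadicCap (q : ℝ) (k : ℕ) : ℝ≥0∞ := (2 : ℝ≥0∞) ^ (-(k * q))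

open Classical in
/-- The minimal `q`-dimensional cost of covering, by dyadic cubes, all the dyadic subcubes of
generation `d` relative to a given cube which are contained in `O`. -/
noncomputable def dyadicContent {n : ℕ} (O : Set (EuclideanSpace ℝ (Fin n))) (q : ℝ) :
    ℕ → ℕ → (Fin n → ℤ) → ℝ≥0∞
  | 0, k, z => if dyadicCube k z ⊆ O then dyadicCap q k else 0
  | d + 1, k, z =>
    min (dyadicCap q k) (∑ w ∈ dyadicChildren z, dyadicContent O q d (k + 1) w)

section Dyadic

variable {n : ℕ}

lemma mem_dyadicChildren {w z : Fin n → ℤ} : w ∈ dyadicChildren z ↔ ∀ i, w i / 2 = z i := by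
  simp only [dyadicChildren, Fintype.mem_piFinset, Finset.mem_insert, Finset.mem_singleton]
  exact forall_congr' fun i => by omega

lemma card_dyadicChildren (z : Fin n → ℤ) : (dyadicChildren z).card = 2 ^ n := by
  simp [dyadicChildren, Fintype.card_piFinset]

lemma floor_two_pow_succ (k : ℕ) (a : ℝ) :
    ⌊(2 : ℝ) ^ (k + 1) * a⌋ / 2 = ⌊(2 : ℝ) ^ k * a⌋ := by
  have h1 := Int.floor_le ((2 : ℝ) ^ (k + 1) * a)
  have h2 := Int.lt_floor_add_one ((2 : ℝ) ^ (k + 1) * a)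
  symm
  rw [Int.floor_eq_iff]
  have h3 : ⌊(2 : ℝ) ^ (k + 1) * a⌋ / 2 * 2 ≤ ⌊(2 : ℝ) ^ (k + 1) * a⌋ := by omega
  have h4 : ⌊(2 : ℝ) ^ (k + 1) * a⌋ + 1 ≤ (⌊(2 : ℝ) ^ (k + 1) * a⌋ / 2 + 1) * 2 := by omega
  have h3' : ((⌊(2 : ℝ) ^ (k + 1) * a⌋ / 2 : ℤ) : ℝ) * 2 ≤ ⌊(2 : ℝ) ^ (k + 1) * a⌋ := by
    exact_mod_cast h3
  have h4' : ((⌊(2 : ℝ) ^ (k + 1) * a⌋ : ℤ) : ℝ) + 1 ≤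
      (((⌊(2 : ℝ) ^ (k + 1) * a⌋ / 2 : ℤ) : ℝ) + 1) * 2 := by
    exact_mod_cast h4
  rw [pow_succ] at *
  constructor <;> linarith

lemma mem_dyadicCube_floor (k : ℕ) (x : EuclideanSpace ℝ (Fin n)) :
    x ∈ dyadicCube k fun i => ⌊(2 : ℝ) ^ k * x i⌋ := fun _ => rfl

lemma dyadicCube_succ_subset {k : ℕ} {z w : Fin n → ℤ} (h : w ∈ dyadicChildren z) :
    dyadicCube (k + 1) w ⊆ dyadicCube k z := by
  intro x hx i
  rw [mem_dyadicChildren] at h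
  rw [← floor_two_pow_succ, hx i, h i]

lemma exists_mem_dyadicCube_succ {k : ℕ} {z : Fin n → ℤ} {x : EuclideanSpace ℝ (Fin n)}
    (h : x ∈ dyadicCube k z) : ∃ w ∈ dyadicChildren z, x ∈ dyadicCube (k + 1) w :=
  ⟨_, mem_dyadicChildren.2 fun i => by rw [floor_two_pow_succ, h i], mem_dyadicCube_floor _ _⟩

lemma dyadicCube_index_unique {k : ℕ} {z w : Fin n → ℤ} {x : EuclideanSpace ℝ (Fin n)}
    (h : x ∈ dyadicCube k z) (hw : x ∈ dyadicCube k w) : z = w :=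
  funext fun i => (h i).symm.trans (hw i)

/-- A dyadic cube is contained in every cube of an earlier generation that it meets. -/
lemma dyadicCube_subset_of_le {k j : ℕ} (hkj : k ≤ j) {z w : Fin n → ℤ}
    {x : EuclideanSpace ℝ (Fin n)} (h : x ∈ dyadicCube k z) (h' : x ∈ dyadicCube j w) :
    dyadicCube j w ⊆ dyadicCube k z := by
  induction j, hkj using Nat.le_induction generalizing w with
  | base => rw [dyadicCube_index_unique h h']
  | succ j _ ih =>
    have hw : w ∈ dyadicChildren (fun i => w i / 2) := mem_dyadicChildren.2 fun _ => rfl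
    exact (dyadicCube_succ_subset hw).trans (ih (dyadicCube_succ_subset hw h'))

lemma measurableSet_dyadicCube (k : ℕ) (z : Fin n → ℤ) : MeasurableSet (dyadicCube k z) := by
  have : dyadicCube k z = ⋂ i, (fun x : EuclideanSpace ℝ (Fin n) => ⌊(2 : ℝ) ^ k * x i⌋) ⁻¹' {z i} := by
    ext x; simp [dyadicCube]
  rw [this]
  refine MeasurableSet.iInter fun i => ?_
  exact (Int.measurable_floor.comp (by fun_prop)) (measurableSet_singleton _)

lemma dist_le_of_mem_dyadicCube {k : ℕ} {z : Fin n → ℤ} {x y : EuclideanSpace ℝ (Fin n)}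
    (hx : x ∈ dyadicCube k z) (hy : y ∈ dyadicCube k z) : dist x y ≤ n * (2 : ℝ)⁻¹ ^ k := by
  have h2 : (0 : ℝ) < 2 ^ k := by positivity
  have hi : ∀ i, |x i - y i| ≤ (2 : ℝ)⁻¹ ^ k := by
    intro i
    have := Int.abs_sub_lt_one_of_floor_eq_floor ((hx i).trans (hy i).symm)
    rw [← mul_sub, abs_mul, abs_of_pos h2] at this
    rw [inv_pow, ← one_div, le_div_iff₀ h2, mul_comm]
    exact this.le
  rw [EuclideanSpace.dist_eq]
  refine Real.sqrt_le_iff.2 ⟨by positivity, ?_⟩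
  calc ∑ i, dist (x i) (y i) ^ 2 ≤ ∑ _i : Fin n, ((2 : ℝ)⁻¹ ^ k) ^ 2 :=
        Finset.sum_le_sum fun i _ => by rw [Real.dist_eq]; gcongr; exact hi i
    _ = n * ((2 : ℝ)⁻¹ ^ k) ^ 2 := by simp
    _ ≤ (n * (2 : ℝ)⁻¹ ^ k) ^ 2 := by
      rw [mul_pow]
      gcongr
      exact_mod_cast Nat.le_self_pow (by norm_num) n

lemma volume_dyadicCube (k : ℕ) (z : Fin n → ℤ) :
    volume (dyadicCube k z) = dyadicCap n k := by
  have h2 : (0 : ℝ) < 2 ^ k := by positivity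
  have h : dyadicCube k z = (WithLp.ofLp : EuclideanSpace ℝ (Fin n) → _) ⁻¹'
      (univ.pi fun i => Ico ((z i : ℝ) / 2 ^ k) ((z i + 1 : ℝ) / 2 ^ k)) := by
    ext x
    simp only [dyadicCube, mem_ofPred_eq, mem_preimage, mem_univ_pi, mem_Ico, Int.floor_eq_iff]
    refine forall_congr' fun i => ?_
    rw [div_le_iff₀ h2, lt_div_iff₀ h2, mul_comm]
  rw [h, (PiLp.volume_preserving_ofLp (Fin n)).measure_preimage
    (MeasurableSet.univ_pi fun i => measurableSet_Ico).nullMeasurableSet, Real.volume_pi_Ico]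
  have : ∀ i, ENNReal.ofReal ((z i + 1 : ℝ) / 2 ^ k - (z i : ℝ) / 2 ^ k) = (2 ^ k)⁻¹ := by
    intro i
    rw [← sub_div, add_sub_cancel_left, one_div, ENNReal.ofReal_inv_of_pos h2,
      ENNReal.ofReal_pow (by norm_num)]
    simp
  simp only [this, Finset.prod_const, Finset.card_univ, Fintype.card_fin]
  rw [dyadicCap, ENNReal.rpow_neg, ← ENNReal.inv_pow, ← pow_mul, ← Nat.cast_mul,
    ENNReal.rpow_natCast]

lemma dyadicCap_ne_zero (q : ℝ) (k : ℕ) : dyadicCap q k ≠ 0 := by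
  simp [dyadicCap]

lemma dyadicCap_ne_top (q : ℝ) (k : ℕ) : dyadicCap q k ≠ ∞ := by
  simp [dyadicCap]

lemma dyadicCap_add (q : ℝ) (k j : ℕ) : dyadicCap q (k + j) = dyadicCap q k * dyadicCap q j := by
  rw [dyadicCap, dyadicCap, dyadicCap, ← ENNReal.rpow_add _ _ (by simp) (by simp)]
  congr 1; push_cast; ring

lemma dyadicCap_anti {p q : ℝ} (h : p ≤ q) (k : ℕ) : dyadicCap q k ≤ dyadicCap p k := by
  refine ENNReal.rpow_le_rpow_of_exponent_le (by simp) ?_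
  gcongr

lemma dyadicContent_le (O : Set (EuclideanSpace ℝ (Fin n))) (q : ℝ) (d k : ℕ) (z : Fin n → ℤ) :
    dyadicContent O q d k z ≤ dyadicCap q k := by
  cases d with
  | zero => rw [dyadicContent]; split_ifs <;> simp
  | succ d => rw [dyadicContent]; exact min_le_left _ _

lemma dyadicContent_le_succ (O : Set (EuclideanSpace ℝ (Fin n))) {q : ℝ} (hq : q ≤ n)
    (d k : ℕ) (z : Fin n → ℤ) :
    dyadicContent O q d k z ≤ dyadicContent O q (d + 1) k z := by
  induction d generalizing k z with
  | zero =>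
    refine le_min (dyadicContent_le ..) ?_
    rw [dyadicContent]
    split_ifs with h
    · have : ∀ w ∈ dyadicChildren z, dyadicContent O q 0 (k + 1) w = dyadicCap q (k + 1) := by
        intro w hw
        rw [dyadicContent, if_pos ((dyadicCube_succ_subset hw).trans h)]
      rw [Finset.sum_congr rfl this, Finset.sum_const, card_dyadicChildren, dyadicCap_add,
        nsmul_eq_mul, mul_left_comm]
      refine le_mul_of_one_le_right' ?_
      calc (1 : ℝ≥0∞) = ((2 ^ n : ℕ) : ℝ≥0∞) * dyadicCap n 1 := by
            rw [dyadicCap]; push_cast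
            rw [one_mul, ENNReal.rpow_neg, ENNReal.rpow_natCast, ENNReal.mul_inv_cancel] <;> simp
        _ ≤ _ := by gcongr; exact dyadicCap_anti hq 1
    · simp
  | succ d ih =>
    rw [dyadicContent, dyadicContent]
    exact min_le_min le_rfl (Finset.sum_le_sum fun w _ => ih _ _)

/-- Mass distribution: the content is attained by a measure which is `q`-dimensional on all dyadic
cubes of later generations. -/
lemma exists_measure_dyadicContent (O : Set (EuclideanSpace ℝ (Fin n))) {q : ℝ} (hq : q ≤ n)
    (d k : ℕ) (z : Fin n → ℤ) :
    ∃ ν : Measure (EuclideanSpace ℝ (Fin n)), ν univ = dyadicContent O q d k z ∧ ν Oᶜ = 0 ∧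
      ν (dyadicCube k z)ᶜ = 0 ∧ ∀ j ≥ k, ∀ w, ν (dyadicCube j w) ≤ dyadicCap q j := by
  induction d generalizing k z with
  | zero =>
    rw [dyadicContent]
    split_ifs with h
    · refine ⟨(dyadicCap q k * (dyadicCap n k)⁻¹) • volume.restrict (dyadicCube k z), ?_, ?_, ?_, ?_⟩
      · simp [volume_dyadicCube, mul_assoc,
          ENNReal.inv_mul_cancel (dyadicCap_ne_zero _ _) (dyadicCap_ne_top _ _)]
      · rw [Measure.smul_apply, Measure.restrict_apply' (measurableSet_dyadicCube k z),
          (disjoint_compl_left_iff_subset.2 h).inter_eq]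
        simp
      · rw [Measure.smul_apply, Measure.restrict_apply' (measurableSet_dyadicCube k z)]
        simp
      · intro j hj w
        obtain ⟨i, rfl⟩ := Nat.exists_eq_add_of_le hj
        rw [Measure.smul_apply, smul_eq_mul]
        calc _ ≤ dyadicCap q k * (dyadicCap n k)⁻¹ * volume (dyadicCube (k + i) w) := by
              gcongr; exact Measure.restrict_le_self
          _ = dyadicCap q k * dyadicCap n i := by
              rw [volume_dyadicCube, dyadicCap_add, mul_assoc, ← mul_assoc _⁻¹,
                ENNReal.inv_mul_cancel (dyadicCap_ne_zero _ _) (dyadicCap_ne_top _ _), one_mul]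
          _ ≤ dyadicCap q (k + i) := by rw [dyadicCap_add]; gcongr; exact dyadicCap_anti hq i
    · exact ⟨0, by simp⟩
  | succ d ih =>
    choose ν h1 h2 h3 h4 using fun w => ih (k + 1) w
    rw [dyadicContent]
    set S := ∑ w ∈ dyadicChildren z, dyadicContent O q d (k + 1) w with hS
    have hStop : S ≠ ∞ := ENNReal.sum_ne_top.2 fun w _ =>
      ne_top_of_le_ne_top (dyadicCap_ne_top q (k + 1)) (dyadicContent_le ..)
    by_cases hS0 : S = 0
    · exact ⟨0, by simp [hS0]⟩
    have hu : ((min (dyadicCap q k) S * S⁻¹) • ∑ w ∈ dyadicChildren z, ν w) univ =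
        min (dyadicCap q k) S := by
      rw [Measure.smul_apply, Measure.finsetSum_apply, Finset.sum_congr rfl fun w _ => h1 w, ← hS,
        smul_eq_mul, mul_assoc, ENNReal.inv_mul_cancel hS0 hStop, mul_one]
    have hc : min (dyadicCap q k) S * S⁻¹ ≤ 1 := by
      calc _ ≤ S * S⁻¹ := by gcongr; exact min_le_right _ _
        _ = 1 := ENNReal.mul_inv_cancel hS0 hStop
    refine ⟨(min (dyadicCap q k) S * S⁻¹) • ∑ w ∈ dyadicChildren z, ν w, hu, ?_, ?_, ?_⟩
    · simp [Measure.finsetSum_apply, h2]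
    · simp only [Measure.smul_apply, Measure.finsetSum_apply, smul_eq_mul]
      rw [Finset.sum_eq_zero fun w hw => measure_mono_null
        (compl_subset_compl.2 (dyadicCube_succ_subset hw)) (h3 w), mul_zero]
    · intro j hj w
      rcases hj.eq_or_lt with rfl | hj
      · exact (measure_mono (subset_univ _)).trans (hu.trans_le (min_le_left _ _))
      · rw [Measure.smul_apply, Measure.finsetSum_apply, smul_eq_mul]
        refine (mul_le_of_le_one_left' hc).trans ?_
        by_cases hw : ∃ w' ∈ dyadicChildren z, (dyadicCube (k + 1) w' ∩ dyadicCube j w).Nonempty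
        · obtain ⟨w', hw', x, hx, hx'⟩ := hw
          have hsub := dyadicCube_subset_of_le (by omega) hx hx'
          rw [Finset.sum_eq_single_of_mem w' hw']
          · exact h4 w' j (by omega) w
          · intro w'' _ hne
            exact measure_mono_null (t := (dyadicCube (k + 1) w'')ᶜ)
              (fun y hy hy' => hne (dyadicCube_index_unique hy' (hsub hy))) (h3 w'')
        · rw [Finset.sum_eq_zero]
          · exact zero_le
          · intro w' hw'
            exact measure_mono_null (t := (dyadicCube (k + 1) w')ᶜ)
              (fun y hy hy' => hw ⟨w', hw', y, hy', hy⟩) (h3 w')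

open Classical in
/-- The dyadic cubes of generation `k` below `z` none of whose strict ancestors satisfies `P`. -/
noncomputable def dyadicAlive (P : ℕ → (Fin n → ℤ) → Prop) (z : Fin n → ℤ) :
    ℕ → Finset (Fin n → ℤ)
  | 0 => {z}
  | k + 1 => ((dyadicAlive P z k).filter fun w => ¬ P k w).biUnion dyadicChildren

open Classical in
/-- A set meeting a unit dyadic cube in an open set whose finite generation contents are small is
efficiently covered by countably many dyadic cubes. -/
lemma exists_dyadic_cover {O : Set (EuclideanSpace ℝ (Fin n))} (hO : IsOpen O) {q : ℝ}
    (hq : q ≤ n) (z : Fin n → ℤ) {ε : ℝ≥0∞} (h : ∀ d, dyadicContent O q d 0 z ≤ ε) :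
    ∃ C : ℕ → Finset (Fin n → ℤ), O ∩ dyadicCube 0 z ⊆ ⋃ k, ⋃ w ∈ C k, dyadicCube k w ∧
      ∑' k, ∑ _w ∈ C k, dyadicCap q k ≤ ε := by
  set m : ℕ → (Fin n → ℤ) → ℝ≥0∞ := fun k w => ⨆ d, dyadicContent O q d k w with hm
  have hmono : ∀ k w, Monotone fun d => dyadicContent O q d k w := fun k w =>
    monotone_nat_of_le_succ fun d => dyadicContent_le_succ O hq d k w
  have hmin : ∀ k w, m k w = min (dyadicCap q k) (∑ w' ∈ dyadicChildren w, m (k + 1) w') := by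
    intro k w
    have h1 : m k w = ⨆ d, dyadicContent O q (d + 1) k w := ((hmono k w).iSup_nat_add 1).symm
    rw [h1]
    simp only [dyadicContent, hm]
    rw [ENNReal.finsetSum_iSup_of_monotone fun w' => hmono (k + 1) w', min_comm, iSup_inf_eq]
    simp only [min_comm, ← inf_iSup_eq]
  obtain ⟨P, hP⟩ : ∃ P : ℕ → (Fin n → ℤ) → Prop, ∀ k w, P k w ↔ m k w = dyadicCap q k :=
    ⟨_, fun _ _ => Iff.rfl⟩
  set L := dyadicAlive P z with hL
  refine ⟨fun k => (L k).filter (P k), ?_, ?_⟩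
  · rintro x ⟨hxO, hxz⟩
    by_contra hx
    have hx' : ∀ k, ∀ w ∈ L k, P k w → x ∉ dyadicCube k w := by
      intro k w hw hPw hxw
      exact hx (mem_iUnion₂.2 ⟨k, w, mem_iUnion.2 ⟨Finset.mem_filter.2 ⟨hw, hPw⟩, hxw⟩⟩)
    have hall : ∀ k, ∃ w ∈ L k, x ∈ dyadicCube k w := by
      intro k
      induction k with
      | zero => exact ⟨z, by simp [hL, dyadicAlive], hxz⟩
      | succ k ih =>
        obtain ⟨w, hw, hxw⟩ := ih
        obtain ⟨w', hw', hxw'⟩ := exists_mem_dyadicCube_succ hxw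
        refine ⟨w', ?_, hxw'⟩
        rw [hL, dyadicAlive, Finset.mem_biUnion]
        exact ⟨w, Finset.mem_filter.2 ⟨hw, fun hc => hx' k w hw hc hxw⟩, hw'⟩
    obtain ⟨r, hr, hrO⟩ := Metric.isOpen_iff.1 hO x hxO
    have hlim : Filter.Tendsto (fun k : ℕ => n * (2 : ℝ)⁻¹ ^ k) Filter.atTop (nhds 0) := by
      simpa using (tendsto_pow_atTop_nhds_zero_of_lt_one (r := (2 : ℝ)⁻¹) (by norm_num)
        (by norm_num)).const_mul (n : ℝ)
    obtain ⟨k, hk⟩ := (hlim.eventually (gt_mem_nhds hr)).exists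
    obtain ⟨w, hw, hxw⟩ := hall k
    refine hx' k w hw ((hP k w).2 (le_antisymm ?_ ?_)) hxw
    · exact iSup_le fun d => dyadicContent_le ..
    · refine le_iSup_of_le 0 ?_
      rw [dyadicContent, if_pos]
      exact fun y hy => hrO ((dist_le_of_mem_dyadicCube hy hxw).trans_lt hk)
  · have hinv : ∀ K, ∑ k ∈ Finset.range K, ∑ _w ∈ (L k).filter (P k), dyadicCap q k +
        ∑ w ∈ L K, m K w ≤ ε := by
      intro K
      induction K with
      | zero => simpa [hL, dyadicAlive, hm] using h
      | succ K ih =>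
        refine le_trans ?_ ih
        rw [Finset.sum_range_succ, add_assoc]
        gcongr
        rw [← Finset.sum_filter_add_sum_filter_not (L K) (P K)]
        gcongr with w hw
        · exact ((hP _ _).1 (Finset.mem_filter.1 hw).2).ge
        · rw [hL, dyadicAlive]
          rw [Finset.sum_biUnion fun v _ w _ hvw => Finset.disjoint_left.2 fun u hu hu' =>
            hvw (funext fun i => (mem_dyadicChildren.1 hu i).symm.trans
              (mem_dyadicChildren.1 hu' i))]
          refine Finset.sum_le_sum fun w hw => ?_
          have hnP : ¬ P K w := (Finset.mem_filter.1 hw).2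
          rw [hmin K w]
          rcases min_choice (dyadicCap q K) (∑ w' ∈ dyadicChildren w, m (K + 1) w') with h' | h'
          · exact absurd ((hP K w).2 ((hmin K w).trans h')) hnP
          · exact h'.ge
    rw [ENNReal.tsum_eq_iSup_nat]
    exact iSup_le fun K => le_self_add.trans (hinv K)

lemma ediam_dyadicCube_le (k : ℕ) (w : Fin n → ℤ) :
    ediam (dyadicCube k w) ≤ n * (2 : ℝ≥0∞)⁻¹ ^ k := by
  refine ediam_le fun x hx y hy => ?_
  rw [edist_dist]
  refine (ENNReal.ofReal_le_ofReal (dist_le_of_mem_dyadicCube hx hy)).trans_eq ?_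
  rw [ENNReal.ofReal_mul (by positivity), ENNReal.ofReal_pow (by positivity),
    ENNReal.ofReal_inv_of_pos (by norm_num)]
  simp

/-- **Frostman lemma** in the form of a criterion for a set to be null: it suffices that the set
has open neighbourhoods on which `q`-dimensional measures have arbitrarily small mass. -/
lemma hausdorffMeasure_eq_zero_of_forall_measure_le {q : ℝ} (hq0 : 0 < q) (hq : q ≤ n)
    (z : Fin n → ℤ) {S : Set (EuclideanSpace ℝ (Fin n))} (hS : S ⊆ dyadicCube 0 z)
    (H : ∀ ε : ℝ≥0∞, 0 < ε → ∃ O, IsOpen O ∧ S ⊆ O ∧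
      ∀ ν : Measure (EuclideanSpace ℝ (Fin n)), ν Oᶜ = 0 → ν univ ≤ 1 →
        (∀ j w, ν (dyadicCube j w) ≤ dyadicCap q j) → ν univ ≤ ε) :
    μH[q] S = 0 := by
  have hcov : ∀ ε : ℝ≥0∞, 0 < ε → ∃ C : ℕ → Finset (Fin n → ℤ),
      S ⊆ ⋃ k, ⋃ w ∈ C k, dyadicCube k w ∧ ∑' k, ∑ _w ∈ C k, dyadicCap q k ≤ ε := by
    intro ε hε
    obtain ⟨O, hO, hSO, hν⟩ := H ε hε
    obtain ⟨C, hC, hC'⟩ := exists_dyadic_cover hO hq z (ε := ε) (by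
      intro d
      obtain ⟨ν, h1, h2, -, h4⟩ := exists_measure_dyadicContent O hq d 0 z
      rw [← h1]
      refine hν ν h2 ?_ fun j w => h4 j (Nat.zero_le j) w
      rw [h1]
      exact (dyadicContent_le ..).trans_eq (by simp [dyadicCap]))
    exact ⟨C, fun x hx => hC ⟨hSO hx, hS hx⟩, hC'⟩
  set c : ℝ≥0∞ := (n : ℝ≥0∞) ^ q with hc
  have hctop : c ≠ ∞ := by simp [hc, hq0.le]
  have hdiam : ∀ k (w : Fin n → ℤ), ediam (dyadicCube k w) ^ q ≤ c * dyadicCap q k := by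
    intro k w
    calc ediam (dyadicCube k w) ^ q ≤ (n * (2 : ℝ≥0∞)⁻¹ ^ k) ^ q := by
          gcongr; exact ediam_dyadicCube_le k w
      _ = c * dyadicCap q k := by
          rw [ENNReal.mul_rpow_of_nonneg _ _ hq0.le, ← ENNReal.rpow_natCast, ← ENNReal.rpow_mul,
            ENNReal.inv_rpow, ← ENNReal.rpow_neg, dyadicCap]
  choose C hC hC' using fun j : ℕ => hcov ((j + 1 : ℕ) : ℝ≥0∞)⁻¹ (by simp)
  have hlim : Filter.Tendsto (fun j : ℕ => c * ((j + 1 : ℕ) : ℝ≥0∞)⁻¹) Filter.atTop (nhds 0) := by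
    have := ENNReal.Tendsto.const_mul (a := c) ((Filter.tendsto_add_atTop_iff_nat 1).2
      ENNReal.tendsto_inv_nat_nhds_zero) (Or.inr hctop)
    simpa using this
  have hsum : ∀ j, ∑' i : Σ k, C j k, ediam (dyadicCube i.1 i.2.1) ^ q ≤
      c * ((j + 1 : ℕ) : ℝ≥0∞)⁻¹ := by
    intro j
    calc ∑' i : Σ k, C j k, ediam (dyadicCube i.1 i.2.1) ^ q
        ≤ ∑' i : Σ k, C j k, c * dyadicCap q i.1 := ENNReal.tsum_le_tsum fun i => hdiam _ _
      _ = c * ∑' k, ∑ _w ∈ C j k, dyadicCap q k := by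
          rw [ENNReal.tsum_mul_left, ENNReal.tsum_sigma']
          congr 2; ext k
          rw [tsum_fintype]; simp
      _ ≤ _ := by gcongr; exact hC' j
  have hrad : Filter.Tendsto (fun j : ℕ => (c * ((j + 1 : ℕ) : ℝ≥0∞)⁻¹) ^ q⁻¹)
      Filter.atTop (nhds 0) := by
    have := hlim.ennrpow_const q⁻¹
    rwa [ENNReal.zero_rpow_of_pos (by positivity)] at this
  have := Measure.hausdorffMeasure_le_liminf_tsum (ι := fun j => Σ k, C j k) q S _ hrad
    (fun j i => dyadicCube i.1 i.2.1)
    (Filter.Eventually.of_forall fun j i => by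
      rw [ENNReal.le_rpow_inv_iff hq0]
      exact (ENNReal.le_tsum i).trans (hsum j))
    (Filter.Eventually.of_forall fun j x hx => by
      obtain ⟨k, hk⟩ := mem_iUnion.1 (hC j hx)
      obtain ⟨w, hw, hxw⟩ := mem_iUnion₂.1 hk
      exact mem_iUnion.2 ⟨⟨k, w, hw⟩, hxw⟩)
  refine le_antisymm (this.trans ?_) zero_le
  refine (Filter.liminf_le_liminf (Filter.Eventually.of_forall hsum)).trans ?_
  rw [hlim.liminf_eq]

end Dyadic

/-! ### Riesz potentials of measures with controlled growth -/

lemma dyadicCap_eq_pow (q : ℝ) (k : ℕ) : dyadicCap q k = ((2 : ℝ≥0∞) ^ (-q)) ^ k := by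
  rw [dyadicCap, ← ENNReal.rpow_natCast, ← ENNReal.rpow_mul]
  congr 1; ring

lemma tsum_dyadicCap_ne_top {p : ℝ} (hp : 0 < p) : ∑' k, dyadicCap p k ≠ ∞ := by
  simp only [dyadicCap_eq_pow, ENNReal.tsum_geometric, ne_eq, ENNReal.inv_eq_top]
  rw [tsub_eq_zero_iff_le, not_le]
  exact ENNReal.rpow_lt_one_of_one_lt_of_neg (by norm_num) (by linarith)

lemma edist_rpow_neg_le {X : Type*} [PseudoMetricSpace X] {t : ℝ} (ht : 0 ≤ t) (x y : X) :
    edist x y ^ (-t) ≤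
      1 + ∑' j : ℕ, (closedBall x ((2 : ℝ)⁻¹ ^ j)).indicator (fun _ => dyadicCap (-t) (j + 1)) y := by
  rcases le_or_gt 1 (edist x y) with h | h
  · refine le_add_right ?_
    rw [ENNReal.rpow_neg, ENNReal.inv_le_one]
    exact ENNReal.one_rpow t ▸ ENNReal.rpow_le_rpow h ht
  rcases (dist_nonneg (x := x) (y := y)).eq_or_lt with h0 | h0
  · refine le_add_left (le_top.trans_eq (Eq.symm ?_))
    rw [← top_le_iff, ← ENNReal.tsum_const_eq_top_of_ne_zero (α := ℕ) (c := 1) one_ne_zero]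
    refine ENNReal.tsum_le_tsum fun j => ?_
    rw [indicator_of_mem]
    · exact (ENNReal.one_rpow _).symm.trans_le
        (ENNReal.rpow_le_rpow one_le_two (by rw [mul_neg, neg_neg]; positivity))
    · rw [mem_closedBall, dist_comm, ← h0]; positivity
  · have h1 : dist x y ≤ 1 := by
      rw [edist_dist, ← ENNReal.ofReal_one, ENNReal.ofReal_lt_ofReal_iff one_pos] at h
      exact h.le
    obtain ⟨j, hj, hj'⟩ := exists_nat_pow_near_of_lt_one h0 h1 (y := (2 : ℝ)⁻¹) (by norm_num)
      (by norm_num)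
    refine le_add_left (le_trans ?_ (ENNReal.le_tsum j))
    rw [indicator_of_mem (by rwa [mem_closedBall, dist_comm]), dyadicCap_eq_pow, neg_neg,
      ENNReal.rpow_neg, ← ENNReal.inv_rpow, ← ENNReal.rpow_natCast, ← ENNReal.rpow_mul, mul_comm t,
      ENNReal.rpow_mul, ENNReal.rpow_natCast]
    gcongr
    rw [ENNReal.inv_le_iff_inv_le, edist_dist]
    refine le_trans (Eq.le ?_) (ENNReal.ofReal_le_ofReal hj.le)
    rw [ENNReal.inv_pow, ENNReal.ofReal_pow (by norm_num), ENNReal.ofReal_inv_of_pos (by norm_num)]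
    simp

lemma lintegral_edist_rpow_neg_le {X : Type*} [PseudoMetricSpace X] [MeasurableSpace X]
    [OpensMeasurableSpace X] (ν : Measure X) (x : X) {t q : ℝ} (ht : 0 ≤ t) {C : ℝ≥0∞}
    (hν : ∀ j : ℕ, ν (closedBall x ((2 : ℝ)⁻¹ ^ j)) ≤ C * dyadicCap q j) :
    ∫⁻ y, edist x y ^ (-t) ∂ν ≤
      ν univ + dyadicCap (-t) 1 * C * ∑' j, dyadicCap (q - t) j := by
  refine (lintegral_mono fun y => edist_rpow_neg_le ht x y).trans ?_
  rw [lintegral_add_left measurable_const, lintegral_one, lintegral_tsum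
    fun j => (measurable_const.indicator measurableSet_closedBall).aemeasurable,
    ← ENNReal.tsum_mul_left]
  gcongr with j
  rw [lintegral_indicator_const measurableSet_closedBall, dyadicCap_add]
  calc _ ≤ dyadicCap (-t) j * dyadicCap (-t) 1 * (C * dyadicCap q j) := by gcongr; exact hν j
    _ = dyadicCap (-t) 1 * C * (dyadicCap (-t) j * dyadicCap q j) := by ring
    _ = _ := by
      congr 1
      rw [dyadicCap, dyadicCap, dyadicCap, ← ENNReal.rpow_add _ _ (by simp) (by simp)]
      congr 1; ring

lemma closedBall_subset_iUnion_dyadicCube {n : ℕ} (x : EuclideanSpace ℝ (Fin n)) (j : ℕ) :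
    closedBall x ((2 : ℝ)⁻¹ ^ j) ⊆
      ⋃ w ∈ Fintype.piFinset fun i => Finset.Icc (⌊(2 : ℝ) ^ j * x i⌋ - 1) (⌊(2 : ℝ) ^ j * x i⌋ + 1),
        dyadicCube j w := by
  intro y hy
  refine mem_iUnion₂.2 ⟨_, Fintype.mem_piFinset.2 fun i => ?_, mem_dyadicCube_floor j y⟩
  have h2 : (0 : ℝ) < 2 ^ j := by positivity
  have h : |y i - x i| ≤ (2 : ℝ)⁻¹ ^ j := by
    have := (PiLp.norm_apply_le (y - x) i).trans (mem_closedBall_iff_norm.1 hy)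
    simpa using this
  rw [inv_pow, ← one_div, le_div_iff₀ h2, ← abs_of_pos h2, ← abs_mul, abs_le] at h
  have h3 := Int.floor_le ((2 : ℝ) ^ j * x i)
  have h4 := Int.lt_floor_add_one ((2 : ℝ) ^ j * x i)
  rw [Finset.mem_Icc, Int.le_floor, ← Int.lt_add_one_iff, Int.floor_lt]
  push_cast
  constructor <;> linarith

lemma measure_closedBall_le_of_dyadicCube {n : ℕ} {ν : Measure (EuclideanSpace ℝ (Fin n))} {q : ℝ}
    {C : ℝ≥0∞} (hν : ∀ j w, ν (dyadicCube j w) ≤ C * dyadicCap q j)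
    (x : EuclideanSpace ℝ (Fin n)) (j : ℕ) :
    ν (closedBall x ((2 : ℝ)⁻¹ ^ j)) ≤ 3 ^ n * C * dyadicCap q j := by
  refine (measure_mono (closedBall_subset_iUnion_dyadicCube x j)).trans
    ((measure_biUnion_finset_le _ _).trans ((Finset.sum_le_sum fun w _ => hν j w).trans_eq ?_))
  rw [Finset.sum_const, Fintype.card_piFinset, nsmul_eq_mul, mul_assoc]
  congr 1
  simp only [Int.card_Icc]
  simp [show ∀ a : ℤ, (a + 1 + 1 - (a - 1)).toNat = 3 by intro a; omega]

/-! ### Slab densities in Gaussian directions -/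

section Slab

open ProbabilityTheory Filter

/-- The normalized indicator function of the interval `[-δ, δ]`. -/
noncomputable def slabKernel (δ t : ℝ) : ℝ≥0∞ :=
  (closedBall (0 : ℝ) δ).indicator (fun _ => (ENNReal.ofReal (2 * δ))⁻¹) t

/-- The correlation of two normalized indicator functions of intervals. -/
noncomputable def slabPair (δ δ' t : ℝ) : ℝ≥0∞ := ∫⁻ u, slabKernel δ u * slabKernel δ' (u + t)

@[fun_prop]
lemma measurable_slabKernel (δ : ℝ) : Measurable (slabKernel δ) :=
  measurable_const.indicator measurableSet_closedBall

lemma lintegral_slabKernel {δ : ℝ} (hδ : 0 < δ) : ∫⁻ t, slabKernel δ t = 1 := by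
  simp only [slabKernel]
  rw [lintegral_indicator_const measurableSet_closedBall, Real.volume_closedBall,
    ENNReal.inv_mul_cancel (ENNReal.ofReal_pos.2 (by positivity)).ne' ENNReal.ofReal_ne_top]

lemma slabKernel_eq_zero {δ t : ℝ} (h : δ < |t|) : slabKernel δ t = 0 :=
  indicator_of_notMem (by simpa using h) _

@[fun_prop]
lemma measurable_slabPair (δ δ' : ℝ) : Measurable (slabPair δ δ') := by
  unfold slabPair
  exact Measurable.lintegral_prod_right' (f := fun p : ℝ × ℝ =>
    slabKernel δ p.2 * slabKernel δ' (p.2 + p.1)) (by fun_prop)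

lemma lintegral_slabPair {δ δ' : ℝ} (hδ : 0 < δ) (hδ' : 0 < δ') :
    ∫⁻ t, slabPair δ δ' t = 1 := by
  unfold slabPair
  rw [lintegral_lintegral_swap (by fun_prop)]
  have : ∀ u, ∫⁻ t, slabKernel δ u * slabKernel δ' (u + t) = slabKernel δ u := by
    intro u
    rw [lintegral_const_mul _ (by fun_prop), lintegral_add_left_eq_self (slabKernel δ') u,
      lintegral_slabKernel hδ', mul_one]
  simp only [this, lintegral_slabKernel hδ]

lemma slabPair_eq_zero {δ δ' t : ℝ} (h : δ + δ' < |t|) : slabPair δ δ' t = 0 := by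
  unfold slabPair
  rw [lintegral_eq_zero_iff (by fun_prop)]
  refine Eventually.of_forall fun u => ?_
  simp only [Pi.zero_apply, mul_eq_zero]
  by_contra! hc
  have h1 : |u| ≤ δ := not_lt.1 fun h' => hc.1 (slabKernel_eq_zero h')
  have h2 : |u + t| ≤ δ' := not_lt.1 fun h' => hc.2 (slabKernel_eq_zero h')
  have : |t| ≤ |u + t| + |u| := by
    have := abs_sub (u + t) u
    simpa using this
  linarith

lemma lintegral_slabKernel_mul_slabKernel (δ δ' a b : ℝ) :
    ∫⁻ u, slabKernel δ (u - a) * slabKernel δ' (u - b) = slabPair δ δ' (a - b) := by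
  rw [slabPair, ← lintegral_sub_right_eq_self
    (fun u => slabKernel δ u * slabKernel δ' (u + (a - b))) a]
  refine lintegral_congr fun u => ?_
  congr 2; ring

/-- The density at the origin of the standard Gaussian distribution on the line. -/
noncomputable def gaussianPeak : ℝ≥0∞ := ENNReal.ofReal (√(2 * Real.pi))⁻¹

lemma gaussianPeak_ne_top : gaussianPeak ≠ ∞ := ENNReal.ofReal_ne_top

lemma gaussianPDF_sq_eq {E : Type*} [NormedAddCommGroup E] {z : E} (hz : z ≠ 0) (t : ℝ) :
    gaussianPDF 0 (‖z‖₊ ^ 2) t =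
      gaussianPeak * ‖z‖ₑ⁻¹ * ENNReal.ofReal (Real.exp (-t ^ 2 / (2 * ‖z‖ ^ 2))) := by
  have hz' : 0 < ‖z‖ := norm_pos_iff.2 hz
  rw [gaussianPDF, gaussianPDFReal, gaussianPeak, ← ofReal_norm, ← ENNReal.ofReal_inv_of_pos hz']
  simp only [NNReal.coe_pow, coe_nnnorm, sub_zero]
  rw [Real.sqrt_mul (by positivity), Real.sqrt_sq hz'.le, mul_inv,
    ENNReal.ofReal_mul (by positivity), ENNReal.ofReal_mul (by positivity)]

variable {E : Type*} [NormedAddCommGroup E] [InnerProductSpace ℝ E] [FiniteDimensional ℝ E]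
  [MeasurableSpace E] [BorelSpace E]

lemma map_inner_stdGaussian (z : E) :
    (stdGaussian E).map (fun e => ⟪z, e⟫) = gaussianReal 0 (‖z‖₊ ^ 2) := by
  have := IsGaussian.map_eq_gaussianReal (μ := stdGaussian E) (innerSL ℝ z)
  rw [integral_strongDual_stdGaussian, variance_dual_stdGaussian, innerSL_apply_norm] at this
  convert this using 2
  · rfl
  rw [Real.toNNReal_pow (norm_nonneg z), norm_toNNReal]

/-- The mean of `slabPair` at `⟪z, e⟫` over Gaussian directions `e`. -/
noncomputable def gaussianSlabPair (δ δ' : ℝ) (z : E) : ℝ≥0∞ :=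
  ∫⁻ e, slabPair δ δ' ⟪z, e⟫ ∂(stdGaussian E)

lemma gaussianSlabPair_eq (δ δ' : ℝ) {z : E} (hz : z ≠ 0) :
    gaussianSlabPair δ δ' z = ∫⁻ t, slabPair δ δ' t * gaussianPDF 0 (‖z‖₊ ^ 2) t := by
  rw [gaussianSlabPair, ← lintegral_map (μ := stdGaussian E) (f := slabPair δ δ')
    (g := fun e => ⟪z, e⟫) (by fun_prop) (by fun_prop), map_inner_stdGaussian,
    gaussianReal_of_var_ne_zero _ (by simpa using hz),
    lintegral_withDensity_eq_lintegral_mul _ (by fun_prop) (by fun_prop)]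
  simp only [Pi.mul_apply, mul_comm]

lemma gaussianSlabPair_le {δ δ' : ℝ} (hδ : 0 < δ) (hδ' : 0 < δ') (z : E) :
    gaussianSlabPair δ δ' z ≤ gaussianPeak * ‖z‖ₑ⁻¹ := by
  rcases eq_or_ne z 0 with rfl | hz
  · have : gaussianPeak ≠ 0 := by simp [gaussianPeak, Real.pi_pos]
    simp [ENNReal.mul_top this]
  rw [gaussianSlabPair_eq δ δ' hz]
  calc _ ≤ ∫⁻ t, slabPair δ δ' t * (gaussianPeak * ‖z‖ₑ⁻¹) := by
        gcongr with t
        rw [gaussianPDF_sq_eq hz]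
        refine mul_le_of_le_one_right' (ENNReal.ofReal_le_one.2 (Real.exp_le_one_iff.2 ?_))
        rw [neg_div, neg_nonpos]; positivity
    _ = _ := by rw [lintegral_mul_const _ (by fun_prop), lintegral_slabPair hδ hδ', one_mul]

lemma le_gaussianSlabPair {δ δ' η : ℝ} (hδ : 0 < δ) (hδ' : 0 < δ') (h : δ + δ' ≤ η) {z : E}
    (hz : z ≠ 0) : gaussianPDF 0 (‖z‖₊ ^ 2) η ≤ gaussianSlabPair δ δ' z := by
  rw [gaussianSlabPair_eq δ δ' hz]
  calc _ = ∫⁻ t, slabPair δ δ' t * gaussianPDF 0 (‖z‖₊ ^ 2) η := by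
        rw [lintegral_mul_const _ (by fun_prop), lintegral_slabPair hδ hδ', one_mul]
    _ ≤ _ := by
        refine lintegral_mono fun t => ?_
        rcases le_or_gt |t| (δ + δ') with ht | ht
        · dsimp only
          gcongr
          rw [gaussianPDF_sq_eq hz, gaussianPDF_sq_eq hz]
          refine mul_le_mul_right (ENNReal.ofReal_le_ofReal (Real.exp_le_exp.2 ?_)) _
          have := sq_le_sq.2 ((ht.trans h).trans (le_abs_self η))
          gcongr
        · simp [slabPair_eq_zero ht]

/-- The density at `p = (e, u)` of the part of `μ` in a slab of width `2 * δ` around the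
hyperplane `⟪y, e⟫ = u`. -/
noncomputable def slabDensity (μ : Measure E) (δ : ℝ) (p : E × ℝ) : ℝ≥0∞ :=
  ∫⁻ y, slabKernel δ (p.2 - ⟪y, p.1⟫) ∂μ

@[fun_prop]
lemma measurable_slabDensity (μ : Measure E) [SFinite μ] (δ : ℝ) :
    Measurable (slabDensity μ δ) := by
  unfold slabDensity
  exact Measurable.lintegral_prod_right' (f := fun q : (E × ℝ) × E =>
    slabKernel δ (q.1.2 - ⟪q.2, q.1.1⟫)) (by fun_prop)

lemma lintegral_slabKernel_mul_weight (μ : Measure E) [SFinite μ] (δ δ' : ℝ) {w : E × E → ℝ≥0∞}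
    (hw : Measurable w) :
    ∫⁻ p, ∫⁻ q, slabKernel δ (p.2 - ⟪q.1, p.1⟫) * slabKernel δ' (p.2 - ⟪q.2, p.1⟫) * w q
        ∂(μ.prod μ) ∂((stdGaussian E).prod volume) =
      ∫⁻ q, w q * gaussianSlabPair δ δ' (q.1 - q.2) ∂(μ.prod μ) := by
  rw [lintegral_lintegral_swap (by fun_prop)]
  refine lintegral_congr fun q => ?_
  rw [lintegral_mul_const _ (by fun_prop), mul_comm, lintegral_prod _ (by fun_prop),
    gaussianSlabPair]
  congr 1
  refine lintegral_congr fun e => ?_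
  dsimp only
  rw [lintegral_slabKernel_mul_slabKernel, inner_sub_left]

lemma lintegral_slabDensity_mul (μ : Measure E) [SFinite μ] (δ δ' : ℝ) :
    ∫⁻ p, slabDensity μ δ p * slabDensity μ δ' p ∂((stdGaussian E).prod volume) =
      ∫⁻ q, gaussianSlabPair δ δ' (q.1 - q.2) ∂(μ.prod μ) := by
  have := lintegral_slabKernel_mul_weight μ δ δ' (w := fun _ => 1) measurable_const
  simp only [mul_one, one_mul] at this
  rw [← this]
  refine lintegral_congr fun p => ?_
  rw [slabDensity, slabDensity, ← lintegral_prod_mul (by fun_prop) (by fun_prop)]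

lemma lintegral_slabDensity_mul_self_le (μ : Measure E) [SFinite μ] {δ δ' : ℝ} (hδ : 0 < δ)
    (hδ' : 0 < δ') :
    ∫⁻ p, slabDensity μ δ p * slabDensity μ δ' p ∂((stdGaussian E).prod volume) ≤
      gaussianPeak * ∫⁻ q, (edist q.1 q.2)⁻¹ ∂(μ.prod μ) := by
  rw [lintegral_slabDensity_mul, ← lintegral_const_mul _ (by fun_prop)]
  refine lintegral_mono fun q => (gaussianSlabPair_le hδ hδ' _).trans_eq ?_
  rw [edist_eq_enorm_sub]

lemma le_liminf_lintegral_slabKernel {f : ℝ → ℝ≥0∞} (hf : LowerSemicontinuous f) (u : ℝ)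
    {δ : ℕ → ℝ} (hδ : ∀ k, 0 < δ k) (hlim : Tendsto δ atTop (nhds 0)) :
    f u ≤ liminf (fun k => ∫⁻ v, slabKernel (δ k) (v - u) * f v) atTop := by
  refine le_of_forall_lt fun a ha => ?_
  obtain ⟨b, hab, hb⟩ := exists_between ha
  refine hab.trans_le (le_liminf_of_le (by isBoundedDefault) ?_)
  obtain ⟨r, hr, hball⟩ := Metric.eventually_nhds_iff.1 (hf u b hb)
  filter_upwards [hlim.eventually (gt_mem_nhds hr)] with k hk
  calc b = ∫⁻ v, slabKernel (δ k) (v - u) * b := by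
        rw [lintegral_mul_const _ (by fun_prop), lintegral_sub_right_eq_self (slabKernel (δ k)) u,
          lintegral_slabKernel (hδ k), one_mul]
    _ ≤ _ := by
        refine lintegral_mono fun v => ?_
        rcases le_or_gt |v - u| (δ k) with hv | hv
        · dsimp only
          gcongr
          exact (hball (hv.trans_lt hk)).le
        · simp [slabKernel_eq_zero hv]

/-- The dual Radon transform of a nonnegative square integrable function, integrated against a
measure of finite Riesz energy of order one. -/
lemma lintegral_dualRadon_le (ν : Measure E) [SFinite ν] {g : E × ℝ → ℝ≥0∞}
    (hg : LowerSemicontinuous g) :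
    ∫⁻ x, ∫⁻ e, g (e, ⟪x, e⟫) ∂(stdGaussian E) ∂ν ≤
      (∫⁻ p, g p ^ (2 : ℝ) ∂((stdGaussian E).prod volume)) ^ (1 / 2 : ℝ) *
        (gaussianPeak * ∫⁻ q, (edist q.1 q.2)⁻¹ ∂(ν.prod ν)) ^ (1 / 2 : ℝ) := by
  have hgm : Measurable g := hg.measurable
  set δ : ℕ → ℝ := fun k => 1 / ((k : ℝ) + 1) with hδdef
  have hδ : ∀ k, 0 < δ k := fun k => by positivity
  have hlim : Tendsto δ atTop (nhds 0) := tendsto_one_div_add_atTop_nhds_zero_nat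
  have hbound : ∀ k, ∫⁻ a, ∫⁻ v, slabKernel (δ k) (v - ⟪a.1, a.2⟫) * g (a.2, v) ∂volume
      ∂(ν.prod (stdGaussian E)) ≤
      (∫⁻ p, g p ^ (2 : ℝ) ∂((stdGaussian E).prod volume)) ^ (1 / 2 : ℝ) *
        (gaussianPeak * ∫⁻ q, (edist q.1 q.2)⁻¹ ∂(ν.prod ν)) ^ (1 / 2 : ℝ) := by
    intro k
    have h1 : ∫⁻ a, ∫⁻ v, slabKernel (δ k) (v - ⟪a.1, a.2⟫) * g (a.2, v) ∂volume
        ∂(ν.prod (stdGaussian E)) =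
        ∫⁻ p, (g * slabDensity ν (δ k)) p ∂((stdGaussian E).prod volume) := by
      rw [lintegral_prod _ (Measurable.aemeasurable (Measurable.lintegral_prod_right'
        (f := fun b : (E × E) × ℝ => slabKernel (δ k) (b.2 - ⟪b.1.1, b.1.2⟫) * g (b.1.2, b.2))
        (by fun_prop)))]
      have h2 : ∀ x : E, ∫⁻ e, ∫⁻ v, slabKernel (δ k) (v - ⟪x, e⟫) * g (e, v) ∂volume ∂(stdGaussian E) =
          ∫⁻ p, slabKernel (δ k) (p.2 - ⟪x, p.1⟫) * g p ∂((stdGaussian E).prod volume) :=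
        fun x => (lintegral_prod (μ := stdGaussian E) (ν := (volume : Measure ℝ)) (fun p =>
          slabKernel (δ k) (p.2 - ⟪x, p.1⟫) * g p) (by fun_prop)).symm
      simp only [h2]
      rw [lintegral_lintegral_swap (by fun_prop)]
      refine lintegral_congr fun p => ?_
      rw [lintegral_mul_const _ (by fun_prop), mul_comm, Pi.mul_apply, slabDensity]
    rw [h1]
    refine (ENNReal.lintegral_mul_le_Lp_mul_Lq _ Real.HolderConjugate.two_two hgm.aemeasurable
      (by fun_prop)).trans ?_
    gcongr
    simp only [ENNReal.rpow_two, sq]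
    exact lintegral_slabDensity_mul_self_le ν (hδ k) (hδ k)
  rw [← lintegral_prod (μ := ν) (ν := stdGaussian E) (fun a => g (a.2, ⟪a.1, a.2⟫)) (by fun_prop)]
  calc ∫⁻ a, g (a.2, ⟪a.1, a.2⟫) ∂(ν.prod (stdGaussian E))
      ≤ ∫⁻ a, liminf (fun k => ∫⁻ v, slabKernel (δ k) (v - ⟪a.1, a.2⟫) * g (a.2, v)) atTop
          ∂(ν.prod (stdGaussian E)) :=
        lintegral_mono fun a => le_liminf_lintegral_slabKernel
          (f := fun v => g (a.2, v)) (hg.comp (by fun_prop)) _ hδ hlim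
    _ ≤ liminf (fun k => ∫⁻ a, ∫⁻ v, slabKernel (δ k) (v - ⟪a.1, a.2⟫) * g (a.2, v) ∂volume
          ∂(ν.prod (stdGaussian E))) atTop :=
        lintegral_liminf_le fun k => Measurable.lintegral_prod_right'
          (f := fun b : (E × E) × ℝ => slabKernel (δ k) (b.2 - ⟪b.1.1, b.1.2⟫) * g (b.1.2, b.2))
          (by fun_prop)
    _ ≤ _ := liminf_le_of_le (by isBoundedDefault) fun b hb => by
        obtain ⟨k, hk⟩ := hb.exists
        exact hk.trans (hbound k)

end Slab

/-! ### Exceptional sets for traces on hyperplanes -/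

section Exceptional

open ProbabilityTheory Filter

lemma lowerSemicontinuous_lintegral {X Y : Type*} [TopologicalSpace X] [FirstCountableTopology X]
    [MeasurableSpace Y] {μ : Measure Y} {f : X → Y → ℝ≥0∞} (hf : ∀ x, Measurable (f x))
    (hl : ∀ y, LowerSemicontinuous fun x => f x y) :
    LowerSemicontinuous fun x => ∫⁻ y, f x y ∂μ := by
  rw [lowerSemicontinuous_iff_isClosed_preimage]
  refine fun c => IsSeqClosed.isClosed fun u x hu hx => ?_
  calc ∫⁻ y, f x y ∂μ ≤ ∫⁻ y, liminf (fun k => f (u k) y) atTop ∂μ := by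
        refine lintegral_mono fun y => ((hl y).le_liminf x).trans ?_
        exact liminf_le_liminf_of_le hx
    _ ≤ liminf (fun k => ∫⁻ y, f (u k) y ∂μ) atTop := lintegral_liminf_le fun k => hf _
    _ ≤ c := liminf_le_of_le (by isBoundedDefault) fun b hb => by
        obtain ⟨k, hk⟩ := hb.exists
        exact hk.trans (hu k)

variable {n : ℕ}

lemma lintegral_inv_edist_le {ν : Measure (EuclideanSpace ℝ (Fin n))} [SFinite ν] {q : ℝ}
    (h1 : ν univ ≤ 1) (hν : ∀ j w, ν (dyadicCube j w) ≤ dyadicCap q j) :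
    ∫⁻ p, (edist p.1 p.2)⁻¹ ∂(ν.prod ν) ≤
      (1 + dyadicCap (-1) 1 * 3 ^ n * ∑' j, dyadicCap (q - 1) j) * ν univ := by
  rw [lintegral_prod _ (by fun_prop), ← lintegral_const]
  refine lintegral_mono fun x => ?_
  have := lintegral_edist_rpow_neg_le ν x zero_le_one
    (measure_closedBall_le_of_dyadicCube (C := 1) (by simpa using hν) x)
  simp only [ENNReal.rpow_neg_one, mul_one] at this
  refine this.trans ?_
  gcongr

lemma dimH_le_one_of_hausdorffMeasure_eq_zero {X : Type*} [EMetricSpace X] [MeasurableSpace X]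
    [BorelSpace X] {S : Set X} (h : ∀ q : ℝ, 1 < q → q ≤ 2 → μH[q] S = 0) : dimH S ≤ 1 := by
  by_contra! hc
  obtain ⟨q, h1, h2⟩ := ENNReal.lt_iff_exists_nnreal_btwn.1 (lt_min hc ENNReal.one_lt_two)
  have h3 := h q (by exact_mod_cast h1) (by exact_mod_cast (h2.trans_le (min_le_right _ _)).le)
  rw [hausdorffMeasure_of_lt_dimH (h2.trans_le (min_le_left _ _))] at h3
  exact ENNReal.top_ne_zero h3

/-- The traces on the hyperplanes through `x` of the square root of an integrable function are
integrable for all `x` outside a set of dimension at most one. -/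
lemma dimH_setOf_lintegral_rpow_eq_top_le (hn : 2 ≤ n)
    {F : EuclideanSpace ℝ (Fin n) × ℝ → ℝ≥0∞} (hF : Measurable F)
    (hint : ∫⁻ p, F p ∂((stdGaussian (EuclideanSpace ℝ (Fin n))).prod volume) ≠ ∞) :
    dimH {x : EuclideanSpace ℝ (Fin n) |
      ∫⁻ e, F (e, ⟪x, e⟫) ^ (1 / 2 : ℝ) ∂(stdGaussian (EuclideanSpace ℝ (Fin n))) = ∞} ≤ 1 := by
  obtain ⟨G, hFG, hG, hGint⟩ := exists_le_lowerSemicontinuous_lintegral_ge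
    ((stdGaussian (EuclideanSpace ℝ (Fin n))).prod volume) F hF one_ne_zero
  set M := ∫⁻ p, G p ∂((stdGaussian (EuclideanSpace ℝ (Fin n))).prod volume) with hMdef
  have hM : M ≠ ∞ := ne_top_of_le_ne_top (by simpa using hint) hGint
  have hg : LowerSemicontinuous fun p => G p ^ (1 / 2 : ℝ) :=
    (ENNReal.continuous_rpow_const).comp_lowerSemicontinuous hG
      (ENNReal.monotone_rpow_of_nonneg (by norm_num))
  set T : EuclideanSpace ℝ (Fin n) → ℝ≥0∞ := fun x =>
    ∫⁻ e, G (e, ⟪x, e⟫) ^ (1 / 2 : ℝ) ∂(stdGaussian (EuclideanSpace ℝ (Fin n))) with hT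
  have hTl : LowerSemicontinuous T := lowerSemicontinuous_lintegral
    (fun x => hg.measurable.comp (by fun_prop))
    fun e => hg.comp (g := fun x => (e, ⟪x, e⟫)) (by fun_prop)
  refine dimH_le_one_of_hausdorffMeasure_eq_zero fun q hq1 hq2 => ?_
  have hcov : ∀ S : Set (EuclideanSpace ℝ (Fin n)),
      S ⊆ ⋃ z : Fin n → ℤ, S ∩ dyadicCube 0 z := fun S x hx =>
    mem_iUnion.2 ⟨_, hx, mem_dyadicCube_floor 0 x⟩
  refine measure_mono_null (hcov _) (measure_iUnion_null fun z => ?_)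
  have hqn : q ≤ n := hq2.trans (by exact_mod_cast hn)
  refine hausdorffMeasure_eq_zero_of_forall_measure_le (by linarith) hqn z inter_subset_right
    fun ε hε => ?_
  set C := gaussianPeak * (1 + dyadicCap (-1) 1 * 3 ^ n * ∑' j, dyadicCap (q - 1) j) with hC
  have hCtop : C ≠ ∞ := by
    have := tsum_dyadicCap_ne_top (p := q - 1) (by linarith)
    have := dyadicCap_ne_top (-1) 1
    have := gaussianPeak_ne_top
    finiteness
  obtain ⟨l, hl⟩ : ∃ l : ℕ, M * C / ε < l :=
    ENNReal.exists_nat_gt (ENNReal.div_ne_top (by finiteness) hε.ne')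
  refine ⟨T ⁻¹' Ioi l, hTl.isOpen_preimage _, fun x hx => ?_, fun ν hO h1 hν => ?_⟩
  · refine lt_of_lt_of_le (ENNReal.natCast_lt_top l) (hx.1.symm.trans_le ?_)
    refine lintegral_mono fun e => ?_
    dsimp only
    gcongr
    exact hFG _
  · have : IsFiniteMeasure ν := ⟨h1.trans_lt ENNReal.one_lt_top⟩
    rcases eq_or_ne (ν univ) 0 with h0 | h0
    · simp [h0]
    have hfin : ν univ ≠ ∞ := measure_ne_top _ _
    have hA : l * ν univ ≤ M ^ (1 / 2 : ℝ) * (C * ν univ) ^ (1 / 2 : ℝ) := by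
      calc l * ν univ = ∫⁻ x, l ∂ν := by rw [lintegral_const]
        _ ≤ ∫⁻ x, T x ∂ν := by
          refine lintegral_mono_ae ?_
          filter_upwards [measure_eq_zero_iff_ae_notMem.1 hO] with x hx
          simpa using (notMem_compl_iff.1 hx).le
        _ ≤ _ := lintegral_dualRadon_le ν hg
        _ ≤ _ := by
          simp only [← ENNReal.rpow_mul]
          norm_num only
          simp only [ENNReal.rpow_one]
          refine mul_le_mul_right (ENNReal.rpow_le_rpow ?_ (by norm_num)) _
          rw [hC, mul_assoc gaussianPeak]
          exact mul_le_mul_right (lintegral_inv_edist_le h1 hν) _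
    have hB : (l * ν univ) ^ 2 ≤ M * (C * ν univ) := by
      calc _ ≤ (M ^ (1 / 2 : ℝ) * (C * ν univ) ^ (1 / 2 : ℝ)) ^ 2 := by gcongr
        _ = _ := by
          rw [mul_pow, ← ENNReal.rpow_natCast, ← ENNReal.rpow_natCast, ← ENNReal.rpow_mul,
            ← ENNReal.rpow_mul]
          norm_num
    have hl0 : (1 : ℝ≥0∞) ≤ l := by
      rcases Nat.eq_zero_or_pos l with h | h
      · simp [h] at hl
      · exact_mod_cast h
    have hD : l * ν univ ≤ M * C := by
      refine (ENNReal.mul_le_mul_iff_left h0 hfin).1 ?_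
      calc l * ν univ * ν univ ≤ (l * ν univ) ^ 2 := by
            rw [sq]
            exact mul_le_mul_right (le_mul_of_one_le_left' hl0) _
        _ ≤ _ := hB.trans_eq (by ring)
    have hl1 : M * C ≤ l * ε :=
      (ENNReal.div_le_iff_le_mul (Or.inl hε.ne') (Or.inr (by finiteness))).1 hl.le
    have hl2 : (l : ℝ≥0∞) * ν univ ≤ l * ε := hD.trans hl1
    exact (ENNReal.mul_le_mul_iff_right (by positivity) (ENNReal.natCast_ne_top l)).1 hl2

lemma dimH_setOf_measure_ne_zero_le (hn : 2 ≤ n) {N : Set (EuclideanSpace ℝ (Fin n) × ℝ)}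
    (hN : ((stdGaussian (EuclideanSpace ℝ (Fin n))).prod volume) N = 0) :
    dimH {x : EuclideanSpace ℝ (Fin n) |
      stdGaussian (EuclideanSpace ℝ (Fin n)) {e | (e, ⟪x, e⟫) ∈ N} ≠ 0} ≤ 1 := by
  set N' := toMeasurable ((stdGaussian (EuclideanSpace ℝ (Fin n))).prod volume) N
  have hN' : MeasurableSet N' := measurableSet_toMeasurable _ _
  refine (dimH_mono fun x hx => ?_).trans (dimH_setOf_lintegral_rpow_eq_top_le hn
    (F := N'.indicator fun _ => ∞) (measurable_const.indicator hN')
    (by rw [lintegral_indicator_const hN', measure_toMeasurable, hN]; simp))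
  have : ∀ e, N'.indicator (fun _ => ∞) (e, ⟪x, e⟫) ^ (1 / 2 : ℝ) =
      ((fun e => (e, ⟪x, e⟫)) ⁻¹' N').indicator (fun _ => (∞ : ℝ≥0∞)) e := fun e => by
    by_cases h : (e, ⟪x, e⟫) ∈ N' <;> simp [indicator, h]
  simp only [mem_ofPred_eq, this]
  rw [lintegral_indicator_const (hN'.preimage (by fun_prop)),
    ENNReal.top_mul]
  exact fun h => hx (measure_mono_null (t := (fun e => (e, ⟪x, e⟫)) ⁻¹' N')
    (fun e he => subset_toMeasurable _ N he) h)

end Exceptional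

/-! ### Compact subsets with controlled Hausdorff measure -/

section Density

variable {n : ℕ}

lemma dyadicCap_antitone {q : ℝ} (hq : 0 ≤ q) {j k : ℕ} (h : j ≤ k) :
    dyadicCap q k ≤ dyadicCap q j := by
  refine ENNReal.rpow_le_rpow_of_exponent_le (by simp) ?_
  gcongr

/-- The points lying in infinitely many dyadic cubes of large `μ`-density form a set of small
Hausdorff measure. -/
lemma hausdorffMeasure_setOf_frequently_le (μ : Measure (EuclideanSpace ℝ (Fin n))) {s : ℝ}
    (hs : 0 < s) {M : ℝ≥0∞} (hM : M ≠ 0) (hM' : M ≠ ∞) :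
    μH[s] {x : EuclideanSpace ℝ (Fin n) | ∀ k₀ : ℕ, ∃ k ≥ k₀,
      M * dyadicCap s k < μ (dyadicCube k fun i => ⌊(2 : ℝ) ^ k * x i⌋)} ≤
      (n : ℝ≥0∞) ^ s * M⁻¹ * μ univ := by
  set P : EuclideanSpace ℝ (Fin n) → ℕ → Prop := fun x k =>
    M * dyadicCap s k < μ (dyadicCube k fun i => ⌊(2 : ℝ) ^ k * x i⌋) with hP
  have hPm : ∀ k, MeasurableSet {x | P x k} := fun k => by
    have : {x | P x k} = ⋃ w ∈ {w | M * dyadicCap s k < μ (dyadicCube k w)}, dyadicCube k w := by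
      ext x
      simp only [mem_iUnion]
      refine ⟨fun h => ⟨_, h, mem_dyadicCube_floor k x⟩, fun ⟨w, hw, hx⟩ => ?_⟩
      rwa [dyadicCube_index_unique hx (mem_dyadicCube_floor k x)] at hw
    rw [this]
    exact MeasurableSet.biUnion (to_countable _) fun w _ => measurableSet_dyadicCube k w
  set R : ℕ → ℕ → Set (EuclideanSpace ℝ (Fin n)) := fun k₀ k =>
    {x | k₀ ≤ k ∧ P x k ∧ ∀ j < k, k₀ ≤ j → ¬ P x j} with hR
  have hRm : ∀ k₀ k, MeasurableSet (R k₀ k) := fun k₀ k => by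
    have : R k₀ k = {x | k₀ ≤ k} ∩ ({x | P x k} ∩ ⋂ j < k, ⋂ (_ : k₀ ≤ j), {x | P x j}ᶜ) := by
      ext x
      simp [hR]
    rw [this]
    exact (MeasurableSet.const _).inter ((hPm k).inter (MeasurableSet.iInter fun j =>
      MeasurableSet.iInter fun _ => MeasurableSet.iInter fun _ => (hPm j).compl))
  set t : ℕ → ℕ × (Fin n → ℤ) → Set (EuclideanSpace ℝ (Fin n)) := fun k₀ p =>
    R k₀ p.1 ∩ dyadicCube p.1 p.2 with ht
  have htm : ∀ k₀ p, MeasurableSet (t k₀ p) := fun k₀ p =>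
    (hRm _ _).inter (measurableSet_dyadicCube _ _)
  have hdisj : ∀ k₀, Pairwise (Function.onFun Disjoint (t k₀)) := by
    rintro k₀ ⟨k, w⟩ ⟨k', w'⟩ hne
    refine Set.disjoint_left.2 fun x ⟨⟨h1, h2, h3⟩, h4⟩ ⟨⟨h1', h2', h3'⟩, h4'⟩ => hne ?_
    obtain rfl : k = k' := by
      rcases lt_trichotomy k k' with h | h | h
      · exact absurd h2 (h3' k h h1)
      · exact h
      · exact absurd h2' (h3 k' h h1')
    exact congrArg _ (dyadicCube_index_unique h4 h4')
  have hcell : ∀ k₀ k w x, x ∈ t k₀ (k, w) → dyadicCube k w ⊆ t k₀ (k, w) := by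
    rintro k₀ k w x ⟨⟨h1, h2, h3⟩, h4⟩ y hy
    have hxy : ∀ j ≤ k, (fun i => ⌊(2 : ℝ) ^ j * x i⌋) = fun i => ⌊(2 : ℝ) ^ j * y i⌋ :=
      fun j hj => dyadicCube_index_unique
        (dyadicCube_subset_of_le hj (mem_dyadicCube_floor j x) h4 hy) (mem_dyadicCube_floor j y)
    have hPxy : ∀ j ≤ k, P x j ↔ P y j := fun j hj => by simp only [hP, hxy j hj]
    exact ⟨⟨h1, (hPxy k le_rfl).1 h2, fun j hj hj' h => h3 j hj hj' ((hPxy j hj.le).2 h)⟩, hy⟩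
  have hbound : ∀ k₀ p, ediam (t k₀ p) ^ s ≤ (n : ℝ≥0∞) ^ s * M⁻¹ * μ (t k₀ p) := by
    rintro k₀ ⟨k, w⟩
    rcases (t k₀ (k, w)).eq_empty_or_nonempty with h | ⟨x, hx⟩
    · rw [h, ediam_empty, ENNReal.zero_rpow_of_pos hs]; exact zero_le
    have h1 : dyadicCap s k ≤ M⁻¹ * μ (t k₀ (k, w)) := by
      have h2 : M * dyadicCap s k < μ (dyadicCube k w) := by
        have := hx.1.2.1
        rwa [hP, ← dyadicCube_index_unique hx.2 (mem_dyadicCube_floor k x)] at this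
      rw [← ENNReal.div_eq_inv_mul, ENNReal.le_div_iff_mul_le (Or.inl hM) (Or.inl hM'), mul_comm]
      exact h2.le.trans (measure_mono (hcell _ _ _ _ hx))
    calc ediam (t k₀ (k, w)) ^ s ≤ (n * (2 : ℝ≥0∞)⁻¹ ^ k) ^ s := by
          gcongr
          exact (ediam_mono inter_subset_right).trans (ediam_dyadicCube_le k w)
      _ = (n : ℝ≥0∞) ^ s * dyadicCap s k := by
          rw [ENNReal.mul_rpow_of_nonneg _ _ hs.le, dyadicCap_eq_pow, ENNReal.rpow_neg,
            ← ENNReal.inv_rpow, ← ENNReal.rpow_natCast, ← ENNReal.rpow_natCast,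
            ← ENNReal.rpow_mul, ← ENNReal.rpow_mul, mul_comm s]
      _ ≤ _ := by rw [mul_assoc]; gcongr
  have hr : Filter.Tendsto (fun k₀ : ℕ => (n : ℝ≥0∞) * (2 : ℝ≥0∞)⁻¹ ^ k₀) Filter.atTop (nhds 0) := by
    rw [← mul_zero (n : ℝ≥0∞)]
    exact ENNReal.Tendsto.const_mul (ENNReal.tendsto_pow_atTop_nhds_zero_of_lt_one (by simp))
      (Or.inr (ENNReal.natCast_ne_top n))
  refine (Measure.hausdorffMeasure_le_liminf_tsum s _ _ hr t
    (Filter.Eventually.of_forall fun k₀ p => ?_) (Filter.Eventually.of_forall fun k₀ x hx => ?_)).trans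
    (Filter.liminf_le_of_le (by isBoundedDefault) fun b hb => ?_)
  · rcases (t k₀ p).eq_empty_or_nonempty with h | ⟨x, hx⟩
    · rw [h, ediam_empty]; exact zero_le
    refine ((ediam_mono inter_subset_right).trans (ediam_dyadicCube_le p.1 p.2)).trans ?_
    exact mul_le_mul_right (pow_le_pow_right_of_le_one' (ENNReal.inv_le_one.2 one_le_two) hx.1.1) _
  · classical
    have hex : ∃ k, k₀ ≤ k ∧ P x k := hx k₀
    refine mem_iUnion.2 ⟨(Nat.find hex, fun i => ⌊(2 : ℝ) ^ Nat.find hex * x i⌋), ⟨(Nat.find_spec hex).1, (Nat.find_spec hex).2, ?_⟩,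
      mem_dyadicCube_floor _ x⟩
    exact fun j hj hj' h => Nat.find_min hex hj ⟨hj', h⟩
  · obtain ⟨k₀, hk⟩ := hb.exists
    refine hk.trans ((ENNReal.tsum_le_tsum fun p => hbound k₀ p).trans ?_)
    rw [ENNReal.tsum_mul_left, ← measure_iUnion (hdisj k₀) (htm k₀)]
    gcongr
    exact subset_univ _

lemma exists_isCompact_dyadicCube_le {s : ℝ} (hs : 0 < s) {A : Set (EuclideanSpace ℝ (Fin n))}
    (hA : MeasurableSet A) (h0 : 0 < μH[s] A) (h1 : μH[s] A < ∞) :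
    ∃ K ⊆ A, IsCompact K ∧ 0 < μH[s] K ∧ ∃ C : ℝ≥0∞, C ≠ ∞ ∧
      ∀ j w, (μH[s].restrict K) (dyadicCube j w) ≤ C * dyadicCap s j := by
  set μ : Measure (EuclideanSpace ℝ (Fin n)) := μH[s].restrict A with hμ
  have hμu : μ univ = μH[s] A := by rw [hμ, Measure.restrict_apply_univ]
  have : IsFiniteMeasure μ := ⟨by rwa [hμu]⟩
  set G : ℕ → Set (EuclideanSpace ℝ (Fin n)) := fun m => {x | ∀ k ≥ m,
    μ (dyadicCube k fun i => ⌊(2 : ℝ) ^ k * x i⌋) ≤ (m + 1 : ℕ) * dyadicCap s k} with hG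
  have hGm : ∀ m, MeasurableSet (G m) := fun m => by
    have : G m = ⋂ k ≥ m, ⋃ w ∈ {w | μ (dyadicCube k w) ≤ (m + 1 : ℕ) * dyadicCap s k},
        dyadicCube k w := by
      ext x
      simp only [mem_iInter, mem_iUnion]
      refine ⟨fun h k hk => ⟨_, h k hk, mem_dyadicCube_floor k x⟩, fun h k hk => ?_⟩
      obtain ⟨w, hw, hx⟩ := h k hk
      rwa [dyadicCube_index_unique hx (mem_dyadicCube_floor k x)] at hw
    rw [this]
    exact MeasurableSet.biInter (to_countable _) fun k _ =>
      MeasurableSet.biUnion (to_countable _) fun w _ => measurableSet_dyadicCube k w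
  have hnull : μH[s] (⋃ m, G m)ᶜ = 0 := by
    refine le_antisymm (ENNReal.le_of_forall_pos_le_add fun ε hε _ => ?_) zero_le
    obtain ⟨m, hm⟩ := ENNReal.exists_nat_gt
      (ENNReal.div_ne_top (x := (n : ℝ≥0∞) ^ s * μ univ) (y := ε) (by finiteness)
        (by exact_mod_cast hε.ne'))
    rw [zero_add]
    refine (measure_mono fun x hx k₀ => ?_).trans ((hausdorffMeasure_setOf_frequently_le μ hs
      (M := (m + 1 : ℕ)) (by simp) (ENNReal.natCast_ne_top _)).trans ?_)
    · have hx' : x ∉ G (max k₀ m) := fun h => hx (mem_iUnion.2 ⟨_, h⟩)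
      simp only [hG, mem_ofPred_eq, not_forall, not_le] at hx'
      obtain ⟨k, hk, hlt⟩ := hx'
      refine ⟨k, (le_max_left _ _).trans hk, lt_of_le_of_lt ?_ hlt⟩
      gcongr
      exact le_max_right _ _
    · rw [mul_right_comm, ← div_eq_mul_inv]
      refine ENNReal.div_le_of_le_mul' ?_
      refine ((ENNReal.div_le_iff_le_mul (Or.inl (by exact_mod_cast hε.ne'))
        (Or.inl ENNReal.coe_ne_top)).1 hm.le).trans ?_
      gcongr
      exact m.le_succ
  obtain ⟨m, hm⟩ : ∃ m, 0 < μ (G m) := by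
    by_contra! hc
    have h2 : μ (⋃ m, G m) = 0 := measure_iUnion_null fun m => nonpos_iff_eq_zero.1 (hc m)
    have h3 : μ univ ≤ 0 := by
      rw [← union_compl_self (⋃ m, G m)]
      refine (measure_union_le _ _).trans ?_
      rw [h2, zero_add]
      exact (Measure.restrict_apply_le _ _).trans hnull.le
    exact absurd (hμu ▸ h3) (not_le.2 h0)
  have hGA : 0 < μ (G m ∩ A) := by
    rwa [hμ, Measure.restrict_apply ((hGm m).inter hA), inter_assoc, inter_self,
      ← Measure.restrict_apply (hGm m)]
  obtain ⟨K, hK, hKc, hKpos⟩ := ((hGm m).inter hA).exists_lt_isCompact hGA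
  have hKA : K ⊆ A := hK.trans inter_subset_right
  have hKμ : μH[s].restrict K ≤ μ := Measure.restrict_mono hKA le_rfl
  refine ⟨K, hKA, hKc, hKpos.trans_le (Measure.restrict_apply_le _ _),
    (m + 1 : ℕ) + μ univ / dyadicCap s m,
    ENNReal.add_ne_top.2 ⟨ENNReal.natCast_ne_top _, ENNReal.div_ne_top (measure_ne_top _ _)
      (dyadicCap_ne_zero s m)⟩, fun j w => ?_⟩
  rw [add_mul]
  rcases le_total m j with hj | hj
  · refine le_add_right ?_
    rcases (K ∩ dyadicCube j w).eq_empty_or_nonempty with he | ⟨x, hxK, hx⟩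
    · rw [Measure.restrict_apply (measurableSet_dyadicCube j w), inter_comm, he]
      simp
    · have := (hK hxK).1 j hj
      rw [← dyadicCube_index_unique hx (mem_dyadicCube_floor j x)] at this
      exact (hKμ _).trans this
  · refine le_add_left ?_
    calc _ ≤ μ univ := (hKμ _).trans (measure_mono (subset_univ _))
      _ = μ univ / dyadicCap s m * dyadicCap s m :=
        (ENNReal.div_mul_cancel (dyadicCap_ne_zero s m) (dyadicCap_ne_top s m)).symm
      _ ≤ _ := by gcongr; exact dyadicCap_antitone hs.le hj

/-- Finiteness of the Riesz energies below the growth exponent. -/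
lemma lintegral_edist_rpow_neg_ne_top {ν : Measure (EuclideanSpace ℝ (Fin n))} [IsFiniteMeasure ν]
    {s t : ℝ} (ht0 : 0 ≤ t) (hts : t < s) {C : ℝ≥0∞} (hC : C ≠ ∞)
    (hν : ∀ j w, ν (dyadicCube j w) ≤ C * dyadicCap s j) :
    ∫⁻ p, edist p.1 p.2 ^ (-t) ∂(ν.prod ν) ≠ ∞ := by
  rw [lintegral_prod _ (by fun_prop)]
  refine ne_top_of_le_ne_top ?_ (lintegral_mono fun x => lintegral_edist_rpow_neg_le ν x ht0
    (measure_closedBall_le_of_dyadicCube hν x))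
  rw [lintegral_const]
  have := tsum_dyadicCap_ne_top (p := s - t) (by linarith)
  have := dyadicCap_ne_top (-t) 1
  finiteness

end Density

/-! ### Upper bounds for the dimension of sections -/

section Upper

open ProbabilityTheory Filter

lemma exists_cover_of_hausdorffMeasure_lt {X : Type*} [EMetricSpace X] [MeasurableSpace X]
    [BorelSpace X] {s : ℝ} (hs : 0 < s) {A : Set X} {c : ℝ≥0∞} (h : μH[s] A < c) {r : ℝ≥0∞}
    (hr : 0 < r) :
    ∃ t : ℕ → Set X, A ⊆ ⋃ i, t i ∧ (∀ i, ediam (t i) ≤ r) ∧ ∑' i, ediam (t i) ^ s < c := by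
  rw [Measure.hausdorffMeasure_apply] at h
  have h' := (le_iSup₂ (f := fun (r : ℝ≥0∞) (_ : 0 < r) => ⨅ (t : ℕ → Set X)
    (_ : A ⊆ ⋃ n, t n) (_ : ∀ n, ediam (t n) ≤ r), ∑' n, ⨆ _ : (t n).Nonempty, ediam (t n) ^ s)
    r hr).trans_lt h
  simp only [iInf_lt_iff] at h'
  obtain ⟨t, hA, ht, hlt⟩ := h'
  refine ⟨t, hA, ht, lt_of_eq_of_lt (tsum_congr fun i => ?_) hlt⟩
  rcases (t i).eq_empty_or_nonempty with he | he
  · simp [he, ENNReal.zero_rpow_of_pos hs]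
  · simp [he]

variable {E : Type*} [NormedAddCommGroup E] [InnerProductSpace ℝ E]

lemma lintegral_slab_indicator {s : ℝ} (hs : 1 < s) (e c : E) {t : Set E} (ht : ediam t ≠ ∞) :
    ∫⁻ u : ℝ, {u : ℝ | |u - ⟪c, e⟫| ≤ ‖e‖ * diam t}.indicator (fun _ => ediam t ^ (s - 1)) u =
      2 * ‖e‖ₑ * ediam t ^ s := by
  have : {u : ℝ | |u - ⟪c, e⟫| ≤ ‖e‖ * diam t} = closedBall ⟪c, e⟫ (‖e‖ * diam t) := by
    ext u; simp [Real.dist_eq]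
  rw [this, lintegral_indicator_const measurableSet_closedBall, Real.volume_closedBall,
    ENNReal.ofReal_mul (by norm_num), ENNReal.ofReal_mul (norm_nonneg e), ofReal_norm,
    diam, ENNReal.ofReal_toReal ht, ENNReal.ofReal_ofNat]
  calc _ = 2 * ‖e‖ₑ * (ediam t ^ (s - 1) * ediam t ^ (1 : ℝ)) := by rw [ENNReal.rpow_one]; ring
    _ = _ := by
      rw [← ENNReal.rpow_add_of_nonneg _ _ (by linarith) zero_le_one]
      congr 2; ring

lemma ae_dimH_inter_hyperplane_le [MeasurableSpace E] [BorelSpace E]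
    [SecondCountableTopology E] {γ : Measure E} [SFinite γ] {s : ℝ}
    (hs : 1 < s) {A : Set E} (hA : μH[s] A < ∞) :
    ∀ᵐ p ∂(γ.prod (volume : Measure ℝ)),
      dimH (A ∩ {y | ⟪y, p.1⟫ = p.2}) ≤ ENNReal.ofReal (s - 1) := by
  have hA1 : μH[s] A < μH[s] A + 1 := ENNReal.lt_add_right hA.ne one_ne_zero
  set r : ℕ → ℝ≥0∞ := fun k => ((k : ℝ≥0∞) + 1)⁻¹ with hrdef
  have hr0 : ∀ k, 0 < r k := fun k => ENNReal.inv_pos.2 (by finiteness)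
  have hr1 : ∀ k, r k ≠ ∞ := fun k => ENNReal.inv_ne_top.2 (by simp)
  choose t hAt htr htsum using fun k =>
    exists_cover_of_hausdorffMeasure_lt (zero_lt_one.trans hs) hA1 (hr0 k)
  have htfin : ∀ k i, ediam (t k i) ≠ ∞ := fun k i => ne_top_of_le_ne_top (hr1 k) (htr k i)
  have hc : ∀ k i, ∃ c : E, (t k i).Nonempty → c ∈ t k i := fun k i => by
    by_cases h : (t k i).Nonempty
    · exact ⟨h.some, fun _ => h.some_mem⟩
    · exact ⟨0, fun h' => absurd h' h⟩
  choose c hc using hc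
  set S : ℕ → ℕ → Set (E × ℝ) := fun k i =>
    {p | |p.2 - ⟪c k i, p.1⟫| ≤ ‖p.1‖ * diam (t k i)} with hSdef
  have hSm : ∀ k i, MeasurableSet (S k i) := fun k i =>
    measurableSet_le (by fun_prop) (by fun_prop)
  set h : ℕ → E × ℝ → ℝ≥0∞ := fun k p =>
    ∑' i, (S k i).indicator (fun _ => ediam (t k i) ^ (s - 1)) p with hhdef
  have hhm : ∀ k, Measurable (h k) := fun k =>
    Measurable.tsum fun i => measurable_const.indicator (hSm k i)
  have hHm : Measurable fun p => liminf (fun k => h k p) atTop := Measurable.liminf hhm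
  have hint : ∀ (e : E) k, ∫⁻ u, h k (e, u) ≤ 2 * ‖e‖ₑ * (μH[s] A + 1) := by
    intro e k
    simp only [hhdef]
    rw [lintegral_tsum (f := fun i u => (S k i).indicator (fun _ => ediam (t k i) ^ (s - 1)) (e, u))
      fun i => ((measurable_const.indicator (hSm k i)).comp measurable_prodMk_left).aemeasurable]
    calc _ = ∑' i, 2 * ‖e‖ₑ * ediam (t k i) ^ s :=
          tsum_congr fun i => lintegral_slab_indicator hs e (c k i) (htfin k i)
      _ ≤ _ := by rw [ENNReal.tsum_mul_left]; gcongr; exact (htsum k).le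
  have hae : ∀ᵐ p ∂(γ.prod (volume : Measure ℝ)), liminf (fun k => h k p) atTop < ∞ := by
    have hm : MeasurableSet {p : E × ℝ | ¬ liminf (fun k => h k p) atTop < ∞} :=
      (measurableSet_lt hHm measurable_const).compl
    rw [ae_iff, Measure.measure_prod_null hm]
    refine Eventually.of_forall fun e => ?_
    refine ae_iff.1 (ae_lt_top (μ := volume) (hHm.comp measurable_prodMk_left) ?_)
    refine ne_top_of_le_ne_top (b := 2 * ‖e‖ₑ * (μH[s] A + 1))
      (ENNReal.mul_ne_top (by finiteness) (by simpa using hA.ne)) ?_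
    refine (lintegral_liminf_le fun k => (hhm k).comp measurable_prodMk_left).trans ?_
    refine liminf_le_of_le (by isBoundedDefault) fun b hb => ?_
    obtain ⟨k, hk⟩ := hb.exists
    exact hk.trans (hint e k)
  filter_upwards [hae] with p hp
  rw [ENNReal.ofReal]
  refine dimH_le_of_hausdorffMeasure_ne_top (ne_top_of_le_ne_top hp.ne ?_)
  rw [Real.coe_toNNReal _ (by linarith)]
  classical
  have hr : Tendsto r atTop (nhds 0) := by
    have := ENNReal.tendsto_inv_nat_nhds_zero.comp (tendsto_add_atTop_nat 1)
    refine this.congr fun k => ?_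
    simp [hrdef]
  refine (Measure.hausdorffMeasure_le_liminf_tsum (s - 1) _ r hr
    (fun k i => if p ∈ S k i then t k i else ∅) (Eventually.of_forall fun k i => ?_)
    (Eventually.of_forall fun k y hy => ?_)).trans (liminf_le_liminf (Eventually.of_forall
      fun k => ENNReal.tsum_le_tsum fun i => ?_))
  · split_ifs
    · exact htr k i
    · simp
  · obtain ⟨i, hi⟩ := mem_iUnion.1 (hAt k hy.1)
    refine mem_iUnion.2 ⟨i, ?_⟩
    rw [if_pos]
    · exact hi
    · change |p.2 - ⟪c k i, p.1⟫| ≤ ‖p.1‖ * diam (t k i)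
      rw [← show ⟪y, p.1⟫ = p.2 from hy.2, ← inner_sub_left, mul_comm]
      refine (abs_real_inner_le_norm _ _).trans ?_
      gcongr
      rw [← dist_eq_norm]
      exact dist_le_diam_of_mem (isBounded_iff_ediam_ne_top.2 (htfin k i)) hi (hc k i ⟨y, hi⟩)
  · by_cases h' : p ∈ S k i
    · simp [h']
    · simp [h', ENNReal.zero_rpow_of_pos (sub_pos.2 hs)]

end Upper

/-! ### Lower bounds for the dimension of sections -/

section Lower

open ProbabilityTheory Filter

lemma ENNReal.tsum_mul_le_rpow_mul_rpow (a b : ℕ → ℝ≥0∞) :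
    ∑' i, a i ^ (1 / 2 : ℝ) * b i ^ (1 / 2 : ℝ) ≤
      (∑' i, a i) ^ (1 / 2 : ℝ) * (∑' i, b i) ^ (1 / 2 : ℝ) := by
  have := ENNReal.lintegral_mul_le_Lp_mul_Lq (Measure.count : Measure ℕ)
    Real.HolderConjugate.two_two (f := fun i => a i ^ (1 / 2 : ℝ))
    (g := fun i => b i ^ (1 / 2 : ℝ)) (by fun_prop) (by fun_prop)
  simpa only [lintegral_count, Pi.mul_apply, ← ENNReal.rpow_mul, one_div,
    inv_mul_cancel₀ (two_ne_zero (α := ℝ)), ENNReal.rpow_one] using this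

lemma exists_open_cover_of_hausdorffMeasure_eq_zero {X : Type*} [MetricSpace X]
    [MeasurableSpace X] [BorelSpace X] {τ : ℝ} (hτ : 0 < τ) {S : Set X} (h : μH[τ] S = 0)
    {ε : ℝ≥0∞} (hε : ε ≠ 0) :
    ∃ (U : ℕ → Set X) (d : ℕ → ℝ≥0∞), (∀ i, IsOpen (U i)) ∧ S ⊆ ⋃ i, U i ∧
      (∀ i, ediam (U i) ≤ d i) ∧ (∀ i, d i ≠ 0) ∧ (∀ i, d i ≠ ∞) ∧ ∑' i, d i ^ τ < ε := by
  have hε2 : ε / 2 ≠ 0 := (ENNReal.half_pos hε).ne'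
  obtain ⟨t, hSt, htd, hts⟩ := exists_cover_of_hausdorffMeasure_lt hτ
    (c := ε / 2) (h.trans_lt (pos_iff_ne_zero.2 hε2)) one_pos
  obtain ⟨ε', hε'0, hε's⟩ := ENNReal.exists_pos_sum_of_countable' hε2 ℕ
  have hρ : ∀ i, ∃ ρ : NNReal, 0 < ρ ∧
      (ediam (t i) + 2 * ρ) ^ τ ≤ ediam (t i) ^ τ + ε' i := fun i => by
    have hcont : Tendsto (fun ρ : NNReal => (ediam (t i) + 2 * (ρ : ℝ≥0∞)) ^ τ)
        (nhds 0) (nhds (ediam (t i) ^ τ)) := by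
      have h1 : Continuous fun ρ : NNReal => (ediam (t i) + 2 * (ρ : ℝ≥0∞)) ^ τ :=
        ENNReal.continuous_rpow_const.comp (continuous_const.add
          ((ENNReal.continuous_const_mul (by simp)).comp ENNReal.continuous_coe))
      simpa using h1.tendsto 0
    have hlt : ediam (t i) ^ τ < ediam (t i) ^ τ + ε' i :=
      ENNReal.lt_add_right (ENNReal.rpow_ne_top_of_nonneg hτ.le
        (ne_top_of_le_ne_top ENNReal.one_ne_top (htd i))) (hε'0 i).ne'
    obtain ⟨ρ, hρ1, hρ2⟩ := ((hcont.mono_left nhdsWithin_le_nhds).eventually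
      (gt_mem_nhds hlt) |>.and (self_mem_nhdsWithin (s := Ioi (0 : NNReal)))).exists
    exact ⟨ρ, hρ2, hρ1.le⟩
  choose ρ hρ0 hρ using hρ
  refine ⟨fun i => thickening (ρ i) (t i), fun i => ediam (t i) + 2 * ρ i,
    fun i => isOpen_thickening, hSt.trans (iUnion_mono fun i =>
      self_subset_thickening (by exact_mod_cast hρ0 i) _), fun i => ediam_thickening_le _,
    fun i => ?_, fun i => ?_, ?_⟩
  · simp [(hρ0 i).ne']
  · have := ne_top_of_le_ne_top ENNReal.one_ne_top (htd i)
    finiteness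
  · calc _ ≤ ∑' i, (ediam (t i) ^ τ + ε' i) := ENNReal.tsum_le_tsum hρ
      _ = _ := ENNReal.tsum_add
      _ < ε / 2 + ε / 2 := ENNReal.add_lt_add hts hε's
      _ = ε := ENNReal.add_halves ε

variable {E : Type*} [NormedAddCommGroup E] [InnerProductSpace ℝ E] [FiniteDimensional ℝ E]
  [MeasurableSpace E] [BorelSpace E]

/-- The Riesz energy of order `τ` of the normalized restriction of `μ` to the slab of width
`2 * δ` around the hyperplane `⟪y, p.1⟫ = p.2`. -/
noncomputable def slabEnergy (μ : Measure E) (τ δ : ℝ) (p : E × ℝ) : ℝ≥0∞ :=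
  ∫⁻ q, slabKernel δ (p.2 - ⟪q.1, p.1⟫) * slabKernel δ (p.2 - ⟪q.2, p.1⟫) *
    edist q.1 q.2 ^ (-τ) ∂(μ.prod μ)

@[fun_prop]
lemma measurable_slabEnergy (μ : Measure E) [SFinite μ] (τ δ : ℝ) :
    Measurable (slabEnergy μ τ δ) := by
  unfold slabEnergy
  exact Measurable.lintegral_prod_right' (f := fun q : (E × ℝ) × (E × E) =>
    slabKernel δ (q.1.2 - ⟪q.2.1, q.1.1⟫) * slabKernel δ (q.1.2 - ⟪q.2.2, q.1.1⟫) *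
    edist q.2.1 q.2.2 ^ (-τ)) (by fun_prop)

lemma lintegral_slabEnergy_le (μ : Measure E) [SFinite μ] {τ δ : ℝ} (hτ : 0 < τ) (hδ : 0 < δ) :
    ∫⁻ p, slabEnergy μ τ δ p ∂((stdGaussian E).prod volume) ≤
      gaussianPeak * ∫⁻ q, edist q.1 q.2 ^ (-(τ + 1)) ∂(μ.prod μ) := by
  simp only [slabEnergy]
  rw [lintegral_slabKernel_mul_weight μ δ δ (w := fun q => edist q.1 q.2 ^ (-τ)) (by fun_prop),
    ← lintegral_const_mul _ (by fun_prop)]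
  refine lintegral_mono fun q => ?_
  calc _ ≤ edist q.1 q.2 ^ (-τ) * (gaussianPeak * ‖q.1 - q.2‖ₑ⁻¹) := by
        gcongr; exact gaussianSlabPair_le hδ hδ _
    _ = gaussianPeak * (edist q.1 q.2 ^ (-τ) * edist q.1 q.2 ^ (-1 : ℝ)) := by
        rw [← edist_eq_enorm_sub, ENNReal.rpow_neg_one]; ring
    _ = _ := by
        congr 1
        rcases eq_or_ne (edist q.1 q.2) 0 with h | h
        · rw [h, ENNReal.zero_rpow_of_neg (by linarith), ENNReal.zero_rpow_of_neg (by linarith),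
            ENNReal.zero_rpow_of_neg (by linarith), ENNReal.top_mul_top]
        · rw [← ENNReal.rpow_add _ _ h (edist_ne_top _ _)]
          congr 1; ring

lemma ae_liminf_slabEnergy_lt_top (μ : Measure E) [SFinite μ] {τ : ℝ} (hτ : 0 < τ) {δ : ℕ → ℝ}
    (hδ : ∀ k, 0 < δ k) (h : ∫⁻ q, edist q.1 q.2 ^ (-(τ + 1)) ∂(μ.prod μ) ≠ ∞) :
    ∀ᵐ p ∂((stdGaussian E).prod volume),
      liminf (fun k => slabEnergy μ τ (δ k) p) atTop < ∞ := by
  refine ae_lt_top (Measurable.liminf fun k => by fun_prop) (ne_top_of_le_ne_top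
    (ENNReal.mul_ne_top gaussianPeak_ne_top h) ?_)
  refine (lintegral_liminf_le fun k => by fun_prop).trans
    (liminf_le_of_le (by isBoundedDefault) fun b hb => ?_)
  obtain ⟨k, hk⟩ := hb.exists
  exact hk.trans (lintegral_slabEnergy_le μ hτ (hδ k))

lemma setLIntegral_le_rpow_mul_rpow {X : Type*} [PseudoEMetricSpace X] [MeasurableSpace X]
    [OpensMeasurableSpace X] [SecondCountableTopology X] (μ : Measure X) [SFinite μ] {τ : ℝ}
    (hτ : 0 < τ) {f : X → ℝ≥0∞} (hf : Measurable f) {V : Set X} (hV : MeasurableSet V)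
    {d : ℝ≥0∞} (hd : ediam V ≤ d) (hd0 : d ≠ 0) (hdtop : d ≠ ∞) :
    ∫⁻ y in V, f y ∂μ ≤ (d ^ τ) ^ (1 / 2 : ℝ) *
      (∫⁻ q in V ×ˢ V, f q.1 * f q.2 * edist q.1 q.2 ^ (-τ) ∂(μ.prod μ)) ^ (1 / 2 : ℝ) := by
  rw [← ENNReal.mul_rpow_of_nonneg _ _ (by norm_num), one_div,
    ENNReal.le_rpow_inv_iff (by norm_num), ENNReal.rpow_two, sq,
    ← lintegral_prod_mul (by fun_prop) (by fun_prop), Measure.prod_restrict,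
    ← lintegral_const_mul _ (by fun_prop)]
  refine setLIntegral_mono' (hV.prod hV) fun q hq => ?_
  have h1 : 1 ≤ d ^ τ * edist q.1 q.2 ^ (-τ) := by
    have h2 : d ^ (-τ) ≤ edist q.1 q.2 ^ (-τ) := by
      rw [ENNReal.rpow_neg, ENNReal.rpow_neg, ENNReal.inv_le_inv]
      gcongr
      exact (edist_le_ediam_of_mem hq.1 hq.2).trans hd
    calc 1 = d ^ τ * d ^ (-τ) := by
          rw [← ENNReal.rpow_add _ _ hd0 hdtop, add_neg_cancel, ENNReal.rpow_zero]
      _ ≤ _ := by gcongr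
  calc f q.1 * f q.2 = f q.1 * f q.2 * 1 := (mul_one _).symm
    _ ≤ f q.1 * f q.2 * (d ^ τ * edist q.1 q.2 ^ (-τ)) := by gcongr
    _ = _ := by ring

lemma hausdorffMeasure_inter_hyperplane_ne_zero (μ : Measure E) [IsFiniteMeasure μ] {K : Set E}
    (hK : IsCompact K) (hμ : μ Kᶜ = 0) {τ : ℝ} (hτ : 0 < τ) {δ : ℕ → ℝ}
    (hlim : Tendsto δ atTop (nhds 0)) (p : E × ℝ) {M c : ℝ≥0∞} (hM : M ≠ ∞) (hc : c ≠ 0)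
    (hfreq : ∃ᶠ k in atTop, c ≤ slabDensity μ (δ k) p ∧ slabEnergy μ τ (δ k) p ≤ M) :
    μH[τ] (K ∩ {y | ⟪y, p.1⟫ = p.2}) ≠ 0 := by
  intro h0
  have hc2 : c ^ 2 ≠ 0 := pow_ne_zero 2 hc
  obtain ⟨ε, hε0, hε⟩ := ENNReal.exists_nnreal_pos_mul_lt hM hc2
  obtain ⟨U, d, hUo, hSU, hUd, hd0, hdt, hsum⟩ := exists_open_cover_of_hausdorffMeasure_eq_zero
    hτ h0 (ε := ε) (by exact_mod_cast hε0.ne')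
  have hsep : ∀ᶠ k in atTop, ∀ y ∈ K \ ⋃ i, U i, δ k < |p.2 - ⟪y, p.1⟫| := by
    have hcomp : IsCompact (K \ ⋃ i, U i) := hK.diff (isOpen_iUnion hUo)
    rcases (K \ ⋃ i, U i).eq_empty_or_nonempty with he | hne
    · simp [he]
    obtain ⟨y₀, hy₀, hmin⟩ := hcomp.exists_isMinOn hne
      (f := fun y => |p.2 - ⟪y, p.1⟫|) (by fun_prop)
    have hpos : 0 < |p.2 - ⟪y₀, p.1⟫| := by
      rw [abs_pos]
      exact fun h => hy₀.2 (hSU ⟨hy₀.1, (sub_eq_zero.1 h).symm⟩)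
    filter_upwards [hlim.eventually (gt_mem_nhds hpos)] with k hk y hy
    exact hk.trans_le (hmin hy)
  obtain ⟨k, ⟨hck, hMk⟩, hk⟩ := (hfreq.and_eventually hsep).exists
  set f : E → ℝ≥0∞ := fun y => slabKernel (δ k) (p.2 - ⟪y, p.1⟫) with hf
  have hfm : Measurable f := by fun_prop
  have hVm : ∀ i, MeasurableSet (disjointed U i) :=
    fun i => MeasurableSet.disjointed (fun j => (hUo j).measurableSet) i
  have hVd : Pairwise (Function.onFun Disjoint (disjointed U)) := disjoint_disjointed U
  have h1 : slabDensity μ (δ k) p ≤ ∑' i, ∫⁻ y in disjointed U i, f y ∂μ := by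
    rw [← lintegral_iUnion hVm hVd, iUnion_disjointed, slabDensity,
      ← lintegral_indicator (isOpen_iUnion hUo).measurableSet]
    refine lintegral_mono_ae ?_
    filter_upwards [measure_eq_zero_iff_ae_notMem.1 hμ] with y hy
    by_cases hyU : y ∈ ⋃ i, U i
    · rw [indicator_of_mem hyU]
    · rw [slabKernel_eq_zero (hk y ⟨notMem_compl_iff.1 hy, hyU⟩)]
      exact zero_le
  have h2 : ∑' i, ∫⁻ q in disjointed U i ×ˢ disjointed U i,
      f q.1 * f q.2 * edist q.1 q.2 ^ (-τ) ∂(μ.prod μ) ≤ slabEnergy μ τ (δ k) p := by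
    rw [← lintegral_iUnion (fun i => (hVm i).prod (hVm i))]
    · exact setLIntegral_le_lintegral _ _
    · exact fun i j hij => Set.disjoint_prod.2 (Or.inl (hVd hij))
  have h3 : c ≤ (ε : ℝ≥0∞) ^ (1 / 2 : ℝ) * M ^ (1 / 2 : ℝ) := by
    refine hck.trans (h1.trans ?_)
    refine (ENNReal.tsum_le_tsum fun i => setLIntegral_le_rpow_mul_rpow μ hτ hfm (hVm i)
      ((ediam_mono (disjointed_subset U i)).trans (hUd i)) (hd0 i) (hdt i)).trans ?_
    refine (ENNReal.tsum_mul_le_rpow_mul_rpow _ _).trans ?_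
    gcongr
    exact h2.trans hMk
  rw [← ENNReal.mul_rpow_of_nonneg _ _ (by norm_num), one_div,
    ENNReal.le_rpow_inv_iff (by norm_num), ENNReal.rpow_two] at h3
  exact absurd hε (not_lt.2 h3)

end Lower

/-! ### Convergence of slab densities through typical points -/

section Convergence

open ProbabilityTheory Filter

lemma ENNReal.tsub_sq_add_two_mul_le {a b : ℝ≥0∞} (hb : b ≠ ∞) :
    (a - b) ^ 2 + 2 * (a * b) ≤ a * a + b * b := by
  rcases le_total a b with h | h
  · rw [tsub_eq_zero_of_le h]
    lift b to NNReal using hb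
    lift a to NNReal using (h.trans_lt ENNReal.coe_lt_top).ne
    norm_cast
    rw [← NNReal.coe_le_coe]
    push_cast
    nlinarith [sq_nonneg ((a : ℝ) - b)]
  · obtain ⟨c, rfl⟩ := exists_add_of_le h
    rw [ENNReal.add_sub_cancel_left hb]
    exact le_of_eq (by ring)

lemma slabDensity_ne_top {E : Type*} [NormedAddCommGroup E] [InnerProductSpace ℝ E]
    [MeasurableSpace E] (μ : Measure E) [IsFiniteMeasure μ] {δ : ℝ} (hδ : 0 < δ)
    (p : E × ℝ) : slabDensity μ δ p ≠ ∞ := by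
  have hc : (ENNReal.ofReal (2 * δ))⁻¹ ≠ ∞ :=
    ENNReal.inv_ne_top.2 (ENNReal.ofReal_pos.2 (by positivity)).ne'
  refine ((lintegral_mono (g := fun _ => (ENNReal.ofReal (2 * δ))⁻¹) fun y => ?_).trans_lt
    (?_ : _ < ∞)).ne
  · exact indicator_le_self' (fun _ _ => zero_le) _
  · rw [lintegral_const]; finiteness

section

variable {E : Type*} [NormedAddCommGroup E] [InnerProductSpace ℝ E] [FiniteDimensional ℝ E]
  [MeasurableSpace E] [BorelSpace E]

lemma tendsto_lintegral_gaussianPDF (μ : Measure E) [IsFiniteMeasure μ]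
    (hL : ∫⁻ q, (edist q.1 q.2)⁻¹ ∂(μ.prod μ) ≠ ∞) {η : ℕ → ℝ} (hη : Tendsto η atTop (nhds 0)) :
    Tendsto (fun k => ∫⁻ q, gaussianPDF 0 (‖q.1 - q.2‖₊ ^ 2) (η k) ∂(μ.prod μ)) atTop
      (nhds (gaussianPeak * ∫⁻ q, (edist q.1 q.2)⁻¹ ∂(μ.prod μ))) := by
  have hne : ∀ᵐ q ∂(μ.prod μ), q.1 - q.2 ≠ 0 := by
    filter_upwards [ae_lt_top (by fun_prop) hL] with q hq h
    rw [sub_eq_zero.1 h] at hq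
    simp at hq
  have hmeas : ∀ k, AEMeasurable (fun q : E × E => gaussianPDF 0 (‖q.1 - q.2‖₊ ^ 2) (η k))
      (μ.prod μ) := fun k => by
    refine AEMeasurable.congr (f := fun q : E × E => gaussianPeak * ‖q.1 - q.2‖ₑ⁻¹ *
      ENNReal.ofReal (Real.exp (-η k ^ 2 / (2 * ‖q.1 - q.2‖ ^ 2)))) (by fun_prop) ?_
    filter_upwards [hne] with q hq using (gaussianPDF_sq_eq hq _).symm
  rw [← lintegral_const_mul _ (by fun_prop)]
  refine tendsto_lintegral_of_dominated_convergence'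
    (fun q => gaussianPeak * (edist q.1 q.2)⁻¹) hmeas (fun k => ?_) ?_ ?_
  · filter_upwards [hne] with q hq
    rw [gaussianPDF_sq_eq hq, edist_eq_enorm_sub]
    refine mul_le_of_le_one_right' (ENNReal.ofReal_le_one.2 (Real.exp_le_one_iff.2 ?_))
    rw [neg_div, neg_nonpos]; positivity
  · rw [lintegral_const_mul _ (by fun_prop)]
    exact ENNReal.mul_ne_top gaussianPeak_ne_top hL
  · filter_upwards [hne] with q hq
    simp only [gaussianPDF_sq_eq hq, edist_eq_enorm_sub]
    have h1 : Tendsto (fun k => ENNReal.ofReal (Real.exp (-η k ^ 2 / (2 * ‖q.1 - q.2‖ ^ 2))))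
        atTop (nhds 1) := by
      have hc : Continuous fun t : ℝ =>
        ENNReal.ofReal (Real.exp (-t ^ 2 / (2 * ‖q.1 - q.2‖ ^ 2))) :=
        ENNReal.continuous_ofReal.comp (by fun_prop)
      simpa [Function.comp_def] using (hc.tendsto 0).comp hη
    simpa using ENNReal.Tendsto.const_mul (a := gaussianPeak * ‖q.1 - q.2‖ₑ⁻¹) h1
      (Or.inl one_ne_zero)

lemma lintegral_tsub_sq_slabDensity_le (μ : Measure E) [IsFiniteMeasure μ]
    (hL : ∫⁻ q, (edist q.1 q.2)⁻¹ ∂(μ.prod μ) ≠ ∞) {δ δ' η : ℝ} (hδ : 0 < δ) (hδ' : 0 < δ')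
    (h : δ + δ' ≤ η) :
    ∫⁻ p, (slabDensity μ δ p - slabDensity μ δ' p) ^ 2 ∂((stdGaussian E).prod volume) ≤
      2 * (gaussianPeak * ∫⁻ q, (edist q.1 q.2)⁻¹ ∂(μ.prod μ)) -
        2 * ∫⁻ q, gaussianPDF 0 (‖q.1 - q.2‖₊ ^ 2) η ∂(μ.prod μ) := by
  set L := gaussianPeak * ∫⁻ q, (edist q.1 q.2)⁻¹ ∂(μ.prod μ) with hLdef
  have hLt : L ≠ ∞ := ENNReal.mul_ne_top gaussianPeak_ne_top hL
  have hne : ∀ᵐ q ∂(μ.prod μ), q.1 - q.2 ≠ 0 := by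
    filter_upwards [ae_lt_top (by fun_prop) hL] with q hq h
    rw [sub_eq_zero.1 h] at hq
    simp at hq
  have hJ : ∫⁻ q, gaussianPDF 0 (‖q.1 - q.2‖₊ ^ 2) η ∂(μ.prod μ) ≤
      ∫⁻ p, slabDensity μ δ p * slabDensity μ δ' p ∂((stdGaussian E).prod volume) := by
    rw [lintegral_slabDensity_mul]
    refine lintegral_mono_ae ?_
    filter_upwards [hne] with q hq using le_gaussianSlabPair hδ hδ' h hq
  have hJL : ∫⁻ q, gaussianPDF 0 (‖q.1 - q.2‖₊ ^ 2) η ∂(μ.prod μ) ≤ L :=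
    hJ.trans (lintegral_slabDensity_mul_self_le μ hδ hδ')
  refine ENNReal.le_sub_of_add_le_right
    (ENNReal.mul_ne_top (by simp) (hJL.trans_lt hLt.lt_top).ne) ?_
  calc _ ≤ ∫⁻ p, (slabDensity μ δ p - slabDensity μ δ' p) ^ 2 ∂((stdGaussian E).prod volume) +
        2 * ∫⁻ p, slabDensity μ δ p * slabDensity μ δ' p ∂((stdGaussian E).prod volume) := by
        gcongr
    _ = ∫⁻ p, (slabDensity μ δ p - slabDensity μ δ' p) ^ 2 +
        2 * (slabDensity μ δ p * slabDensity μ δ' p) ∂((stdGaussian E).prod volume) := by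
        rw [← lintegral_const_mul _ (by fun_prop), ← lintegral_add_right _ (by fun_prop)]
    _ ≤ ∫⁻ p, slabDensity μ δ p * slabDensity μ δ p +
        slabDensity μ δ' p * slabDensity μ δ' p ∂((stdGaussian E).prod volume) :=
        lintegral_mono fun p => ENNReal.tsub_sq_add_two_mul_le (slabDensity_ne_top μ hδ' p)
    _ ≤ L + L := by
        rw [lintegral_add_right _ (by fun_prop)]
        exact add_le_add (lintegral_slabDensity_mul_self_le μ hδ hδ)
          (lintegral_slabDensity_mul_self_le μ hδ' hδ')
    _ = 2 * L := (two_mul L).symm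

lemma exists_seq_lintegral_tsub_sq_slabDensity_le (μ : Measure E) [IsFiniteMeasure μ]
    (hL : ∫⁻ q, (edist q.1 q.2)⁻¹ ∂(μ.prod μ) ≠ ∞) {ε : ℕ → ℝ≥0∞} (hε : ∀ k, ε k ≠ 0) :
    ∃ δ : ℕ → ℝ, (∀ k, 0 < δ k) ∧ (∀ k, δ k ≤ 1) ∧ Tendsto δ atTop (nhds 0) ∧
      ∀ k, ∫⁻ p, (slabDensity μ (δ k) p - slabDensity μ (δ (k + 1)) p) ^ 2
        ∂((stdGaussian E).prod volume) ≤ ε k := by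
  set L := gaussianPeak * ∫⁻ q, (edist q.1 q.2)⁻¹ ∂(μ.prod μ) with hLdef
  have hLt : L ≠ ∞ := ENNReal.mul_ne_top gaussianPeak_ne_top hL
  have hd := tendsto_one_div_add_atTop_nhds_zero_nat (𝕜 := ℝ)
  have hη : Tendsto (fun N : ℕ => 2 * (1 / ((N : ℝ) + 1))) atTop (nhds 0) := by
    simpa using hd.const_mul 2
  have hlim := (ENNReal.Tendsto.sub (tendsto_const_nhds (x := 2 * L))
    (ENNReal.Tendsto.const_mul (a := 2) (tendsto_lintegral_gaussianPDF μ hL hη) (by simp))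
    (Or.inl (by finiteness)))
  rw [tsub_self] at hlim
  have hex : ∀ k, ∀ᶠ N : ℕ in atTop, ∀ M : ℕ, N ≤ M →
      ∫⁻ p, (slabDensity μ (1 / ((N : ℝ) + 1)) p - slabDensity μ (1 / ((M : ℝ) + 1)) p) ^ 2
        ∂((stdGaussian E).prod volume) ≤ ε k := fun k => by
    filter_upwards [hlim.eventually_le_const (pos_iff_ne_zero.2 (hε k))] with N hN M hM
    refine (lintegral_tsub_sq_slabDensity_le μ hL (by positivity) (by positivity) ?_).trans hN
    rw [two_mul]
    gcongr
  obtain ⟨φ, hφ, hφ'⟩ := extraction_forall_of_eventually hex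
  refine ⟨fun k => 1 / ((φ k : ℝ) + 1), fun k => by positivity, fun k => ?_,
    hd.comp hφ.tendsto_atTop, fun k => hφ' k _ (hφ.monotone k.le_succ)⟩
  rw [div_le_one (by positivity)]
  simp

lemma lintegral_gaussianPDF_le_lintegral_slabDensity (μ : Measure E) [SFinite μ] (x : E)
    (hx : μ {x} = 0) {δ : ℝ} (hδ : 0 < δ) (hδ1 : δ ≤ 1) :
    ∫⁻ y, gaussianPDF 0 (‖x - y‖₊ ^ 2) 1 ∂μ ≤
      ∫⁻ e, slabDensity μ δ (e, ⟪x, e⟫) ∂(stdGaussian E) := by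
  have hswap : ∫⁻ e, slabDensity μ δ (e, ⟪x, e⟫) ∂(stdGaussian E) =
      ∫⁻ y, ∫⁻ e, slabKernel δ ⟪x - y, e⟫ ∂(stdGaussian E) ∂μ := by
    simp only [slabDensity, ← inner_sub_left]
    exact lintegral_lintegral_swap (by fun_prop)
  rw [hswap]
  refine lintegral_mono_ae ?_
  filter_upwards [measure_eq_zero_iff_ae_notMem.1 hx] with y hy
  have hz : x - y ≠ 0 := fun h => hy (sub_eq_zero.1 h).symm
  rw [← lintegral_map (μ := stdGaussian E) (f := slabKernel δ)
    (g := fun e => ⟪x - y, e⟫) (by fun_prop) (by fun_prop), map_inner_stdGaussian,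
    gaussianReal_of_var_ne_zero _ (by simpa using hz),
    lintegral_withDensity_eq_lintegral_mul _ (by fun_prop) (by fun_prop)]
  calc _ = ∫⁻ t, gaussianPDF 0 (‖x - y‖₊ ^ 2) 1 * slabKernel δ t := by
        rw [lintegral_const_mul _ (by fun_prop), lintegral_slabKernel hδ, mul_one]
    _ ≤ _ := by
        refine lintegral_mono fun t => ?_
        rcases le_or_gt |t| δ with ht | ht
        · refine mul_le_mul_left ?_ _
          rw [gaussianPDF_sq_eq hz, gaussianPDF_sq_eq hz]
          refine mul_le_mul_right (ENNReal.ofReal_le_ofReal (Real.exp_le_exp.2 ?_)) _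
          have : t ^ 2 ≤ 1 ^ 2 := sq_le_sq.2 (by simpa using ht.trans hδ1)
          gcongr
        · simp [slabKernel_eq_zero ht]

end

/-- The slab densities through a point `x` outside a set of dimension one are bounded below in a
set of directions of positive measure. -/
lemma exists_seq_dimH_setOf_slabDensity_le {n : ℕ} (hn : 2 ≤ n)
    (μ : Measure (EuclideanSpace ℝ (Fin n))) [IsFiniteMeasure μ] (hμ : μ ≠ 0)
    (hμx : ∀ x, μ {x} = 0) (hL : ∫⁻ q, (edist q.1 q.2)⁻¹ ∂(μ.prod μ) ≠ ∞) :
    ∃ δ : ℕ → ℝ, (∀ k, 0 < δ k) ∧ Tendsto δ atTop (nhds 0) ∧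
      dimH {x | ∀ᵐ e ∂(stdGaussian (EuclideanSpace ℝ (Fin n))),
        ∀ c ≠ 0, ∃ᶠ k in atTop, slabDensity μ (δ k) (e, ⟪x, e⟫) < c} ≤ 1 := by
  obtain ⟨δ, hδ0, hδ1, hδ, hdiff⟩ := exists_seq_lintegral_tsub_sq_slabDensity_le μ hL
    (ε := fun k => (4⁻¹ * 2⁻¹) ^ k) (fun k => by simp)
  refine ⟨δ, hδ0, hδ, ?_⟩
  set F : EuclideanSpace ℝ (Fin n) × ℝ → ℝ≥0∞ := fun p =>
    ∑' k, 4 ^ k * (slabDensity μ (δ k) p - slabDensity μ (δ (k + 1)) p) ^ 2 with hF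
  have hFm : Measurable F := by fun_prop
  have hFint : ∫⁻ p, F p ∂((stdGaussian (EuclideanSpace ℝ (Fin n))).prod volume) ≠ ∞ := by
    rw [lintegral_tsum (fun k => by fun_prop)]
    refine (lt_of_le_of_lt (ENNReal.tsum_le_tsum (g := fun k => 2⁻¹ ^ k) fun k => ?_) ?_).ne
    · rw [lintegral_const_mul _ (by fun_prop)]
      refine (mul_le_mul_right (hdiff k) _).trans_eq ?_
      rw [← mul_pow, ← mul_assoc, ENNReal.mul_inv_cancel (by simp) (by simp), one_mul]
    · rw [ENNReal.tsum_geometric]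
      simp
  refine le_trans (dimH_mono fun x hx => ?_) (dimH_setOf_lintegral_rpow_eq_top_le hn hFm hFint)
  by_contra hG
  set G : EuclideanSpace ℝ (Fin n) → ℝ≥0∞ := fun e => F (e, ⟪x, e⟫) ^ (1 / 2 : ℝ) with hGdef
  have hGm : Measurable G := by fun_prop
  replace hG : ∫⁻ e, G e ∂(stdGaussian (EuclideanSpace ℝ (Fin n))) ≠ ∞ := hG
  have hstep : ∀ e k, slabDensity μ (δ k) (e, ⟪x, e⟫) ≤
      slabDensity μ (δ (k + 1)) (e, ⟪x, e⟫) + 2⁻¹ ^ k * G e := fun e k => by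
    refine tsub_le_iff_left.1 ?_
    have h1 : 4 ^ k * (slabDensity μ (δ k) (e, ⟪x, e⟫) -
        slabDensity μ (δ (k + 1)) (e, ⟪x, e⟫)) ^ 2 ≤ F (e, ⟪x, e⟫) :=
      ENNReal.le_tsum (f := fun k => 4 ^ k * (slabDensity μ (δ k) (e, ⟪x, e⟫) -
        slabDensity μ (δ (k + 1)) (e, ⟪x, e⟫)) ^ 2) k
    have h2 := ENNReal.rpow_le_rpow h1 (by norm_num : (0 : ℝ) ≤ 1 / 2)
    have h3 : (4 : ℝ≥0∞) ^ k = (2 ^ k) ^ 2 := by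
      rw [← pow_mul, mul_comm, pow_mul]; norm_num
    rw [h3, ← mul_pow, ← ENNReal.rpow_natCast, ← ENNReal.rpow_mul] at h2
    norm_num only [ENNReal.rpow_one] at h2
    rw [← ENNReal.inv_pow, mul_comm, ← div_eq_mul_inv, ENNReal.le_div_iff_mul_le (by simp) (by simp),
      mul_comm]
    exact h2
  have hsum : ∀ e k j, slabDensity μ (δ k) (e, ⟪x, e⟫) ≤
      slabDensity μ (δ (k + j)) (e, ⟪x, e⟫) + ∑ i ∈ Finset.range j, 2⁻¹ ^ (k + i) * G e := by
    intro e k j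
    induction j with
    | zero => simp
    | succ j ih =>
      refine ih.trans ((add_le_add_left (hstep e (k + j)) _).trans_eq ?_)
      rw [Finset.sum_range_succ, add_assoc, add_assoc, add_comm (2⁻¹ ^ (k + j) * G e)]
  have hsum' : ∀ e k j, k ≤ j → slabDensity μ (δ k) (e, ⟪x, e⟫) ≤
      slabDensity μ (δ j) (e, ⟪x, e⟫) + 2⁻¹ ^ k * (2 * G e) := fun e k j hkj => by
    obtain ⟨j, rfl⟩ := Nat.exists_eq_add_of_le hkj
    refine (hsum e k j).trans (add_le_add_right ?_ _)
    calc _ ≤ ∑' i, 2⁻¹ ^ (k + i) * G e := ENNReal.sum_le_tsum _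
      _ = 2⁻¹ ^ k * (2 * G e) := by
        simp only [pow_add, mul_assoc]
        rw [ENNReal.tsum_mul_left, ENNReal.tsum_mul_right, ENNReal.tsum_geometric]
        simp
  have hsmall : ∀ k, ∀ᵐ e ∂(stdGaussian (EuclideanSpace ℝ (Fin n))),
      slabDensity μ (δ k) (e, ⟪x, e⟫) ≤ 2⁻¹ ^ k * (2 * G e) := fun k => by
    filter_upwards [hx] with e he
    refine ENNReal.le_of_forall_pos_le_add fun ε hε _ => ?_
    obtain ⟨j, hj, hkj⟩ := ((he ε (by simpa using hε.ne')).and_eventually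
      (eventually_ge_atTop k)).exists
    rw [add_comm]
    exact (hsum' e k j hkj).trans (add_le_add_left hj.le _)
  have hlow : ∀ k, ∫⁻ y, gaussianPDF 0 (‖x - y‖₊ ^ 2) 1 ∂μ ≤
      2⁻¹ ^ k * (2 * ∫⁻ e, G e ∂(stdGaussian (EuclideanSpace ℝ (Fin n)))) := fun k => by
    refine (lintegral_gaussianPDF_le_lintegral_slabDensity μ x (hμx x) (hδ0 k) (hδ1 k)).trans
      ((lintegral_mono_ae (hsmall k)).trans_eq ?_)
    rw [lintegral_const_mul _ (by fun_prop), lintegral_const_mul _ (by fun_prop)]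
  have hzero : ∫⁻ y, gaussianPDF 0 (‖x - y‖₊ ^ 2) 1 ∂μ = 0 := by
    refine le_antisymm (ge_of_tendsto' (x := atTop) ?_ hlow) zero_le
    simpa using ENNReal.Tendsto.mul_const
      (b := 2 * ∫⁻ e, G e ∂(stdGaussian (EuclideanSpace ℝ (Fin n))))
      (ENNReal.tendsto_pow_atTop_nhds_zero_of_lt_one (r := 2⁻¹) (by simp))
      (Or.inr (by finiteness))
  have hne : ∀ᵐ y ∂μ, y ≠ x := measure_eq_zero_iff_ae_notMem.1 (hμx x)
  have hae : AEMeasurable (fun y => gaussianPDF 0 (‖x - y‖₊ ^ 2) 1) μ := by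
    refine AEMeasurable.congr (f := fun y => gaussianPeak * ‖x - y‖ₑ⁻¹ *
      ENNReal.ofReal (Real.exp (-1 ^ 2 / (2 * ‖x - y‖ ^ 2)))) (by fun_prop) ?_
    filter_upwards [hne] with y hy using (gaussianPDF_sq_eq (sub_ne_zero.2 hy.symm) _).symm
  rw [lintegral_eq_zero_iff' hae] at hzero
  refine hμ (ae_eq_bot.1 (eventually_false_iff_eq_bot.1 ?_))
  filter_upwards [hne, hzero] with y hy h0
  exact (gaussianPDF_pos 0 (by simpa [sub_eq_zero] using hy.symm) 1).ne' h0

end Convergence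

/-! ### Null sets of directions -/

section Directions

open ProbabilityTheory Filter

variable {n : ℕ}

lemma gaussianReal_closedBall_le (a r : ℝ) :
    gaussianReal 0 1 (closedBall a r) ≤ ENNReal.ofReal (2 * r) := by
  rw [gaussianReal_apply 0 one_ne_zero, ← Real.volume_closedBall, ← setLIntegral_one]
  refine lintegral_mono fun t => ?_
  rw [gaussianPDF, gaussianPDFReal, ENNReal.ofReal_le_one]
  refine mul_le_one₀ (inv_le_one_of_one_le₀ ?_) (Real.exp_nonneg _) (Real.exp_le_one_iff.2 ?_)
  · rw [Real.one_le_sqrt]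
    simp only [NNReal.coe_one, mul_one]
    linarith [Real.pi_gt_three]
  · rw [neg_div, neg_nonpos]
    positivity

lemma stdGaussian_closedBall_le (x : EuclideanSpace ℝ (Fin n)) (r : ℝ) :
    stdGaussian (EuclideanSpace ℝ (Fin n)) (closedBall x r) ≤ ENNReal.ofReal (2 * r) ^ n := by
  rw [← map_pi_eq_stdGaussian, Measure.map_apply (by fun_prop) measurableSet_closedBall]
  calc _ ≤ (Measure.pi fun _ : Fin n => gaussianReal 0 1)
        (univ.pi fun i => closedBall (x i) r) := by
        refine measure_mono fun y hy i _ => ?_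
        rw [mem_preimage, mem_closedBall, dist_eq_norm] at hy
        rw [mem_closedBall, dist_eq_norm]
        exact (PiLp.norm_apply_le (WithLp.toLp 2 y - x) i).trans hy
    _ = ∏ i : Fin n, gaussianReal 0 1 (closedBall (x i) r) := Measure.pi_pi _ _
    _ ≤ ∏ _i : Fin n, ENNReal.ofReal (2 * r) :=
        Finset.prod_le_prod' fun i _ => gaussianReal_closedBall_le _ _
    _ = _ := by simp

lemma stdGaussian_singleton_zero (hn : 0 < n) :
    stdGaussian (EuclideanSpace ℝ (Fin n)) {0} = 0 := by
  set z : EuclideanSpace ℝ (Fin n) := EuclideanSpace.single ⟨0, hn⟩ 1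
  have h := congrArg (fun ν => ν {0}) (map_inner_stdGaussian z)
  have hz : ‖z‖₊ ^ 2 = 1 := by simp [z]
  have := nullSingletonClass_gaussianReal (μ := 0) (one_ne_zero (α := NNReal))
  rw [hz, Measure.map_apply (by fun_prop) (by simp), measure_singleton] at h
  exact measure_mono_null (fun e he => by simp [mem_singleton_iff.1 he]) h

/-- The cone over a set of unit vectors, truncated to a ball. -/
def truncatedCone (R : ℝ) (t : Set (EuclideanSpace ℝ (Fin n))) : Set (EuclideanSpace ℝ (Fin n)) :=
  {y | ∃ r, 0 ≤ r ∧ r ≤ R ∧ ∃ u ∈ t, ‖u‖ = 1 ∧ y = r • u}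

lemma stdGaussian_truncatedCone_le {R d : ℝ} (hR : 0 ≤ R) (hd : 0 < d) (hd1 : d ≤ 1)
    {t : Set (EuclideanSpace ℝ (Fin n))} (ht : ∀ u ∈ t, ∀ v ∈ t, dist u v ≤ d) :
    stdGaussian (EuclideanSpace ℝ (Fin n)) (truncatedCone R t) ≤
      ENNReal.ofReal ((R + 1) * (2 * (R + 1)) ^ n) * ENNReal.ofReal d ^ ((n : ℝ) - 1) := by
  by_cases hne : ∃ u ∈ t, ‖u‖ = 1
  swap
  · have : truncatedCone R t = ∅ := by
      refine eq_empty_of_forall_notMem fun y hy => ?_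
      obtain ⟨r, -, -, u, hu, hu1, -⟩ := hy
      exact hne ⟨u, hu, hu1⟩
    simp [this]
  obtain ⟨v, hv, hv1⟩ := hne
  set N := ⌊R / d⌋₊ + 1 with hN
  have hcov : truncatedCone R t ⊆
      ⋃ k ∈ Finset.range N, closedBall ((k * d : ℝ) • v) ((R + 1) * d) := by
    rintro y ⟨r, hr0, hrR, u, hu, hu1, rfl⟩
    simp only [mem_iUnion, Finset.mem_range, mem_closedBall, exists_prop]
    refine ⟨⌊r / d⌋₊, Nat.lt_succ_of_le (Nat.floor_le_floor (by gcongr)), ?_⟩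
    have h1 : (⌊r / d⌋₊ : ℝ) * d ≤ r := (le_div_iff₀ hd).1 (Nat.floor_le (by positivity))
    have h2 : r < (⌊r / d⌋₊ + 1 : ℝ) * d := (div_lt_iff₀ hd).1 (Nat.lt_floor_add_one _)
    calc dist (r • u) ((⌊r / d⌋₊ * d : ℝ) • v)
        ≤ dist (r • u) (r • v) + dist (r • v) ((⌊r / d⌋₊ * d : ℝ) • v) := dist_triangle _ _ _
      _ = r * dist u v + (r - ⌊r / d⌋₊ * d) := by
          rw [dist_smul₀, dist_eq_norm (r • v), ← sub_smul, norm_smul, hv1, mul_one,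
            Real.norm_of_nonneg hr0, Real.norm_of_nonneg (sub_nonneg.2 h1)]
      _ ≤ R * d + d := by
          have := mul_le_mul hrR (ht u hu v hv) dist_nonneg hR
          linarith
      _ = (R + 1) * d := by ring
  have hNd : (N : ℝ) ≤ (R + 1) * d⁻¹ := by
    have h1 : (⌊R / d⌋₊ : ℝ) ≤ R / d := Nat.floor_le (by positivity)
    have h2 : 1 ≤ d⁻¹ := one_le_inv₀ hd |>.2 hd1
    rw [hN]; push_cast
    rw [add_mul, one_mul, ← div_eq_mul_inv]
    linarith
  calc _ ≤ ∑ k ∈ Finset.range N, stdGaussian (EuclideanSpace ℝ (Fin n))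
          (closedBall ((k * d : ℝ) • v) ((R + 1) * d)) :=
        (measure_mono hcov).trans (measure_biUnion_finset_le _ _)
    _ ≤ ∑ _k ∈ Finset.range N, ENNReal.ofReal (2 * ((R + 1) * d)) ^ n :=
        Finset.sum_le_sum fun k _ => stdGaussian_closedBall_le _ _
    _ = ENNReal.ofReal (N * (2 * ((R + 1) * d)) ^ n) := by
        rw [Finset.sum_const, Finset.card_range, nsmul_eq_mul,
          ENNReal.ofReal_mul N.cast_nonneg, ENNReal.ofReal_natCast,
          ENNReal.ofReal_pow (by positivity)]
    _ ≤ ENNReal.ofReal ((R + 1) * (2 * (R + 1)) ^ n * d ^ ((n : ℝ) - 1)) := by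
        refine ENNReal.ofReal_le_ofReal ?_
        rw [Real.rpow_sub hd, Real.rpow_natCast, Real.rpow_one]
        calc _ ≤ (R + 1) * d⁻¹ * (2 * ((R + 1) * d)) ^ n := by gcongr
          _ = _ := by rw [mul_pow, mul_pow, mul_pow]; ring
    _ = _ := by
        rw [ENNReal.ofReal_mul (by positivity), ← ENNReal.ofReal_rpow_of_pos hd]

lemma stdGaussian_truncatedCone_eq_zero (hn : 2 ≤ n) {D : Set (EuclideanSpace ℝ (Fin n))}
    (hD : μH[(n : ℝ) - 1] D = 0) {R : ℝ} (hR : 0 ≤ R) :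
    stdGaussian (EuclideanSpace ℝ (Fin n)) (truncatedCone R D) = 0 := by
  have hτ : (0 : ℝ) < (n : ℝ) - 1 := by
    have : (2 : ℝ) ≤ n := mod_cast hn
    linarith
  set C := ENNReal.ofReal ((R + 1) * (2 * (R + 1)) ^ n) with hC
  have key : ∀ ε : ℝ≥0∞, ε ≠ 0 → ε ≤ 1 →
      stdGaussian (EuclideanSpace ℝ (Fin n)) (truncatedCone R D) ≤ C * ε := fun ε hε hε1 => by
    obtain ⟨U, d, -, hDU, hUd, hd0, hdt, hsum⟩ := exists_open_cover_of_hausdorffMeasure_eq_zero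
      hτ hD hε
    have hd1 : ∀ i, d i ≤ 1 := fun i => by
      have := ((ENNReal.le_tsum i).trans hsum.le).trans hε1
      rwa [← ENNReal.one_rpow ((n : ℝ) - 1), ENNReal.rpow_le_rpow_iff hτ] at this
    calc _ ≤ ∑' i, stdGaussian (EuclideanSpace ℝ (Fin n)) (truncatedCone R (U i)) := by
          refine (measure_mono ?_).trans (measure_iUnion_le _)
          rintro y ⟨r, hr0, hrR, u, hu, hu1, rfl⟩
          obtain ⟨i, hi⟩ := mem_iUnion.1 (hDU hu)
          exact mem_iUnion.2 ⟨i, r, hr0, hrR, u, hi, hu1, rfl⟩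
      _ ≤ ∑' i, C * d i ^ ((n : ℝ) - 1) := by
          refine ENNReal.tsum_le_tsum fun i => ?_
          have := stdGaussian_truncatedCone_le (n := n) hR
            (ENNReal.toReal_pos (hd0 i) (hdt i)) (ENNReal.toReal_le_of_le_ofReal zero_le_one
              (by simpa using hd1 i)) (t := U i) fun u hu v hv => by
            rw [dist_edist]
            exact ENNReal.toReal_mono (hdt i) ((edist_le_ediam_of_mem hu hv).trans (hUd i))
          rwa [ENNReal.ofReal_toReal (hdt i)] at this
      _ ≤ C * ε := by
          rw [ENNReal.tsum_mul_left]
          exact mul_le_mul_right hsum.le _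
  refine le_antisymm (ge_of_tendsto (x := atTop) (f := fun k : ℕ => C * 2⁻¹ ^ k) ?_
    (Eventually.of_forall fun k => key _ (by simp) (pow_le_one' (by simp) _))) zero_le
  simpa using ENNReal.Tendsto.const_mul (a := C)
    (ENNReal.tendsto_pow_atTop_nhds_zero_of_lt_one (r := 2⁻¹) (by simp))
    (Or.inr ENNReal.ofReal_ne_top)

/-- A set of unit vectors of zero surface measure is missed by almost all Gaussian directions. -/
lemma ae_stdGaussian_normalize_notMem (hn : 2 ≤ n) {D : Set (EuclideanSpace ℝ (Fin n))}
    (hD : μH[(n : ℝ) - 1] D = 0) :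
    ∀ᵐ e ∂(stdGaussian (EuclideanSpace ℝ (Fin n))), e ≠ 0 ∧ ‖e‖⁻¹ • e ∉ D := by
  have h : ∀ᵐ e ∂(stdGaussian (EuclideanSpace ℝ (Fin n))), ∀ k : ℕ, e ∉ truncatedCone k D :=
    ae_all_iff.2 fun k => measure_eq_zero_iff_ae_notMem.1
      (stdGaussian_truncatedCone_eq_zero hn hD k.cast_nonneg)
  filter_upwards [h, measure_eq_zero_iff_ae_notMem.1 (stdGaussian_singleton_zero (n := n) (by lia))]
    with e he he0
  refine ⟨he0, fun hmem => ?_⟩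
  have hpos : ‖e‖ ≠ 0 := norm_ne_zero_iff.2 he0
  obtain ⟨k, hk⟩ := exists_nat_ge ‖e‖
  refine he k ⟨‖e‖, norm_nonneg e, hk, _, hmem, ?_, ?_⟩
  · rw [norm_smul, norm_inv, norm_norm, inv_mul_cancel₀ hpos]
  · rw [smul_smul, mul_inv_cancel₀ hpos, one_smul]

end Directions

/-! ### Hyperplane sections through typical points -/

section Main

open ProbabilityTheory Filter

lemma exists_measurableSet_superset_dimH_le {X : Type*} [EMetricSpace X] [MeasurableSpace X]
    [BorelSpace X] {S : Set X} {d : NNReal} (h : dimH S ≤ d) :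
    ∃ B, S ⊆ B ∧ MeasurableSet B ∧ dimH B ≤ d := by
  have hpos : ∀ j : ℕ, (0 : NNReal) < 1 / ((j : NNReal) + 1) := fun j => by positivity
  refine ⟨⋂ j : ℕ, toMeasurable μH[((d + 1 / ((j : NNReal) + 1) : NNReal) : ℝ)] S,
    subset_iInter fun j => subset_toMeasurable _ _,
    MeasurableSet.iInter fun j => measurableSet_toMeasurable _ _, ?_⟩
  have hlim : Tendsto (fun j : ℕ => ((d + 1 / ((j : NNReal) + 1) : NNReal) : ℝ≥0∞)) atTop
      (nhds d) := by
    rw [ENNReal.tendsto_coe]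
    simpa using (tendsto_one_div_add_atTop_nhds_zero_nat (𝕜 := NNReal)).const_add d
  refine ge_of_tendsto' hlim fun j => dimH_le_of_hausdorffMeasure_ne_top ?_
  refine ne_of_eq_of_ne (measure_mono_null (iInter_subset _ j) ?_) ENNReal.zero_ne_top
  rw [measure_toMeasurable]
  exact hausdorffMeasure_of_dimH_lt
    (h.trans_lt (ENNReal.coe_lt_coe.2 (lt_add_of_pos_right d (hpos j))))

variable {n : ℕ}

lemma dimH_setOf_not_ae_le (hn : 2 ≤ n) {P : EuclideanSpace ℝ (Fin n) × ℝ → Prop}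
    (hP : ∀ᵐ p ∂((stdGaussian (EuclideanSpace ℝ (Fin n))).prod volume), P p) :
    dimH {x | ¬ ∀ᵐ e ∂(stdGaussian (EuclideanSpace ℝ (Fin n))), P (e, ⟪x, e⟫)} ≤ 1 :=
  dimH_setOf_measure_ne_zero_le hn (ae_iff.1 hP)

end Main

open ProbabilityTheory Filter in
theorem stmt_14 (n : ℕ) (hn : 2 ≤ n) (s : ℝ) (hs1 : 1 < s) (hs2 : s ≤ n)
    (A : Set (EuclideanSpace ℝ (Fin n))) (hA : MeasurableSet A)
    (h0 : 0 < μH[s] A) (h1 : μH[s] A < ∞) :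
    ∃ B : Set (EuclideanSpace ℝ (Fin n)), MeasurableSet B ∧
      dimH B ≤ 1 ∧
      ∀ x ∉ B, 0 < μH[(n : ℝ) - 1]
        {e : EuclideanSpace ℝ (Fin n) | ‖e‖ = 1 ∧
          dimH (A ∩ {y | ⟪y - x, e⟫ = 0}) = ENNReal.ofReal (s - 1)} := by
  have hs0 : 0 < s := by linarith
  obtain ⟨K, hKA, hK, hK0, C, hC, hKC⟩ := exists_isCompact_dyadicCube_le hs0 hA h0 h1
  set μ : Measure (EuclideanSpace ℝ (Fin n)) := μH[s].restrict K with hμ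
  have hKtop : μH[s] K < ∞ := (measure_mono hKA).trans_lt h1
  have : IsFiniteMeasure μ := ⟨by rwa [hμ, Measure.restrict_apply_univ]⟩
  have hμ0 : μ ≠ 0 := fun h => hK0.ne' (by simpa [hμ] using congrArg (fun ν => ν univ) h)
  have hμx : ∀ x, μ {x} = 0 := fun x => by
    have := Measure.nullSingletonClass_hausdorff (EuclideanSpace ℝ (Fin n)) hs0
    exact measure_singleton x
  have hμK : μ Kᶜ = 0 := by
    rw [hμ, Measure.restrict_apply hK.measurableSet.compl, compl_inter_self, measure_empty]
  have hL : ∫⁻ q, (edist q.1 q.2)⁻¹ ∂(μ.prod μ) ≠ ∞ := by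
    simpa only [ENNReal.rpow_neg_one] using
      lintegral_edist_rpow_neg_ne_top zero_le_one hs1 hC hKC
  set τ : ℕ → ℝ := fun i => (s - 1) * (1 - 1 / ((i + 1 : ℕ) + 1)) with hτ
  have hτ' : ∀ i, 0 < τ i ∧ τ i + 1 < s := fun i => by
    have h2 : (0 : ℝ) < 1 / ((i + 1 : ℕ) + 1) := by positivity
    have h3 : (1 : ℝ) / ((i + 1 : ℕ) + 1) < 1 := by
      rw [div_lt_one (by positivity)]; push_cast; linarith [i.cast_nonneg (α := ℝ)]
    have h4 : 0 < s - 1 := by linarith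
    constructor
    · exact mul_pos h4 (by linarith)
    · simp only [hτ]
      nlinarith
  have hτlim : Tendsto τ atTop (nhds (s - 1)) := by
    simpa [hτ] using (((tendsto_one_div_add_atTop_nhds_zero_nat (𝕜 := ℝ)).comp
      (tendsto_add_atTop_nat 1)).const_sub 1).const_mul (s - 1)
  obtain ⟨δ, hδ0, hδ, hS⟩ := exists_seq_dimH_setOf_slabDensity_le hn μ hμ0 hμx hL
  have hup := dimH_setOf_not_ae_le hn
    (ae_dimH_inter_hyperplane_le (γ := stdGaussian (EuclideanSpace ℝ (Fin n))) hs1 h1)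
  have hlow := dimH_setOf_not_ae_le hn (ae_all_iff.2 fun i => ae_liminf_slabEnergy_lt_top μ
    (hτ' i).1 hδ0 (lintegral_edist_rpow_neg_ne_top (by linarith [(hτ' i).1]) (hτ' i).2 hC hKC))
  obtain ⟨B, hSB, hBm, hB⟩ := exists_measurableSet_superset_dimH_le (d := 1)
    (le_trans (dimH_union _ _).le (max_le hS (le_trans (dimH_union _ _).le (max_le hup hlow))))
  refine ⟨B, hBm, hB, fun x hx => pos_iff_ne_zero.2 fun hD => hx (hSB ?_)⟩
  by_contra hx'
  simp only [mem_union, not_or, mem_ofPred_eq, not_not] at hx'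
  obtain ⟨hx1, hx2, hx3⟩ := hx'
  refine hx1 ?_
  filter_upwards [hx2, hx3, ae_stdGaussian_normalize_notMem hn hD] with e hup hlow hDe
  by_contra! hc
  obtain ⟨c, hc0, hc⟩ := hc
  refine hDe.2 ⟨?_, ?_⟩
  · rw [norm_smul, norm_inv, norm_norm, inv_mul_cancel₀ (norm_ne_zero_iff.2 hDe.1)]
  have hslice : {y | ⟪y - x, ‖e‖⁻¹ • e⟫ = 0} = {y | ⟪y, e⟫ = ⟪x, e⟫} := by
    ext y
    simp [inner_smul_right, inner_sub_left, sub_eq_zero, hDe.1]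
  rw [hslice]
  refine le_antisymm hup (le_of_tendsto' (ENNReal.tendsto_ofReal hτlim) fun i => ?_)
  obtain ⟨M, hM, hMt⟩ := exists_between (hlow i)
  have hfreq := (frequently_lt_of_liminf_lt (by isBoundedDefault) hM).mono fun k hk => hk.le
  have hne := hausdorffMeasure_inter_hyperplane_ne_zero μ hK hμK (hτ' i).1 hδ (e, ⟪x, e⟫)
    hMt.ne hc0 ((hfreq.and_eventually hc).mono fun k hk => ⟨hk.2, hk.1⟩)
  refine le_trans (le_dimH_of_hausdorffMeasure_ne_zero (d := (τ i).toNNReal) ?_)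
    (dimH_mono (inter_subset_inter_left _ hKA))
  rwa [Real.coe_toNNReal _ (hτ' i).1.le]
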